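/- Assume d > 1 and fix x₀ ∈ Γ; set B_j = B(x₀, 2^j) for j ∈ ℕ. Then: (a) for every u ∈ W the limit u⁰ := lim_{j→∞} ⨍_{B_j} u dy exists and is finite, and |⨍_{B_j} u dy − u⁰| ≤ C 2^{j(1−d)/2} ‖u‖_W for all j ≥ 0, with C depending only on n, d, C₀; (b) for every u ∈ W with u⁰ = 0 there exists a sequence (u_k) of functions in C_c^∞(ℝⁿ) such that u_k → u in L¹_loc(ℝⁿ) and ‖u_k − u‖_W → 0. -/

import Mathlib

open MeasureTheory Metric Set Filter
open scoped ENNReal NNReal Topology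

noncomputable section

/-- Euclidean space `ℝⁿ`. -/
abbrev Euc (n : ℕ) := EuclideanSpace ℝ (Fin n)

/-- `Γ ⊆ ℝⁿ` is `d`-Ahlfors regular with constant `C₀`. -/
def AhlforsRegular (n : ℕ) (d C₀ : ℝ) (Γ : Set (Euc n)) : Prop :=
  ∀ x ∈ Γ, ∀ r : ℝ, 0 < r →
    ENNReal.ofReal (C₀⁻¹ * r ^ d) ≤ μH[d] (Γ ∩ ball x r) ∧
      μH[d] (Γ ∩ ball x r) ≤ ENNReal.ofReal (C₀ * r ^ d)

/-- The weight `w(x) = dist(x, Γ) ^ (d + 1 - n)`. -/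
def weightW (n : ℕ) (d : ℝ) (Γ : Set (Euc n)) (x : Euc n) : ℝ :=
  infDist x Γ ^ (d + 1 - (n : ℝ))

/-- The measure `m` with density `w` with respect to Lebesgue measure. -/
def measW (n : ℕ) (d : ℝ) (Γ : Set (Euc n)) : Measure (Euc n) :=
  volume.withDensity fun x => ENNReal.ofReal (weightW n d Γ x)

/-- `v` is a distributional gradient of `u` on the open set `E`: for every smooth
compactly supported test function `φ` with support in `E`, `∫_E u ∇φ = -∫_E φ v`. -/
def IsDistribGradOn {n : ℕ} (u : Euc n → ℝ) (v : Euc n → Euc n) (E : Set (Euc n)) : Prop :=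
  ∀ φ : Euc n → ℝ, ContDiff ℝ (⊤ : ℕ∞) φ → HasCompactSupport φ → tsupport φ ⊆ E →
    ∫ x in E, u x • gradient φ x = -∫ x in E, φ x • v x

/-- The averages of `u` over small balls centered at `x` converge to `t`. -/
def HasTraceAt {n : ℕ} (u : Euc n → ℝ) (x : Euc n) (t : ℝ) : Prop :=
  Tendsto (fun ρ : ℝ => ⨍ y in ball x ρ, u y) (𝓝[>] (0 : ℝ)) (𝓝 t)

/-- `u` belongs to the weighted Sobolev space `W = Ẇ^{1,2}_w(Ω)`, `Ω = Γᶜ`, with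
distributional gradient `v` on `Ω` lying in `L²(Ω, m)`. -/
structure MemW (n : ℕ) (d : ℝ) (Γ : Set (Euc n)) (u : Euc n → ℝ) (v : Euc n → Euc n) :
    Prop where
  locInt : LocallyIntegrableOn u Γᶜ volume
  gradLocInt : LocallyIntegrableOn v Γᶜ volume
  isGrad : IsDistribGradOn u v Γᶜ
  l2 : ∫⁻ x in Γᶜ, ENNReal.ofReal (‖v x‖ ^ 2) ∂(measW n d Γ) < ⊤

/-- `u` belongs to the local space `W_r(E)`: `u ∈ L¹_loc(E)` and `φ u` (extended by `0`)
belongs to `W` for every smooth compactly supported `φ` with support in `E`. -/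
def MemWrOn (n : ℕ) (d : ℝ) (Γ : Set (Euc n)) (E : Set (Euc n)) (u : Euc n → ℝ) : Prop :=
  LocallyIntegrableOn u E volume ∧
    ∀ φ : Euc n → ℝ, ContDiff ℝ (⊤ : ℕ∞) φ → HasCompactSupport φ → tsupport φ ⊆ E →
      ∃ vφ : Euc n → Euc n, MemW n d Γ (fun x => φ x * u x) vφ

/-- Degenerate ellipticity and boundedness conditions for the matrix `A`. -/
def EllipticOn (n : ℕ) (d : ℝ) (Γ : Set (Euc n)) (A : Euc n → Euc n →L[ℝ] Euc n)
    (C₁ : ℝ) : Prop :=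
  ∀ x, x ∉ Γ →
    (∀ ξ ζ : Euc n, |∑ i, A x ξ i * ζ i| ≤ C₁ * weightW n d Γ x * ‖ξ‖ * ‖ζ‖) ∧
      ∀ ξ : Euc n, C₁⁻¹ * weightW n d Γ x * ‖ξ‖ ^ 2 ≤ ∑ i, A x ξ i * ξ i

/-- `u`, with gradient `v`, is a weak subsolution of `- div A ∇u = 0` on `U ⊆ Ω = Γᶜ`. -/
def SubsolOn {n : ℕ} (Γ : Set (Euc n)) (A : Euc n → Euc n →L[ℝ] Euc n)
    (v : Euc n → Euc n) (U : Set (Euc n)) : Prop :=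
  ∀ φ : Euc n → ℝ, ContDiff ℝ (⊤ : ℕ∞) φ → HasCompactSupport φ → tsupport φ ⊆ U →
    (∀ x, 0 ≤ φ x) → ∫ x in Γᶜ, ∑ i, A x (v x) i * gradient φ x i ≤ 0

/-- `u`, with gradient `v`, is a weak supersolution of `- div A ∇u = 0` on `U ⊆ Ω = Γᶜ`. -/
def SupersolOn {n : ℕ} (Γ : Set (Euc n)) (A : Euc n → Euc n →L[ℝ] Euc n)
    (v : Euc n → Euc n) (U : Set (Euc n)) : Prop :=
  ∀ φ : Euc n → ℝ, ContDiff ℝ (⊤ : ℕ∞) φ → HasCompactSupport φ → tsupport φ ⊆ U →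
    (∀ x, 0 ≤ φ x) → 0 ≤ ∫ x in Γᶜ, ∑ i, A x (v x) i * gradient φ x i

/-- `u`, with gradient `v`, is a weak solution of `- div A ∇u = 0` on `U ⊆ Ω = Γᶜ`. -/
def SolOn {n : ℕ} (Γ : Set (Euc n)) (A : Euc n → Euc n →L[ℝ] Euc n)
    (v : Euc n → Euc n) (U : Set (Euc n)) : Prop :=
  ∀ φ : Euc n → ℝ, ContDiff ℝ (⊤ : ℕ∞) φ → HasCompactSupport φ → tsupport φ ⊆ U →
    ∫ x in Γᶜ, ∑ i, A x (v x) i * gradient φ x i = 0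

section
/-- Muckenhoupt `A₁` type condition. -/
def A1 {n : ℕ} (W : Euc n → ℝ≥0∞) (A : ℝ≥0∞) : Prop :=
  ∀ᵐ z : Euc n, ∀ r : ℝ, 0 < r → ∫⁻ x in ball z r, W x ≤ A * volume (ball z r) * W z

lemma A1_one {n : ℕ} : A1 (fun _ : Euc n => (1 : ℝ≥0∞)) 1 := by
  refine Eventually.of_forall fun z r hr => ?_
  simp

lemma jensen_rpow {α : Type*} [MeasurableSpace α] (μ : Measure α) [IsProbabilityMeasure μ]
    {p : ℝ} (hp : 1 ≤ p) {g : α → ℝ≥0∞} (hg : AEMeasurable g μ) :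
    (∫⁻ x, g x ∂μ) ^ p ≤ ∫⁻ x, g x ^ p ∂μ := by
  have h := eLpNorm'_le_eLpNorm'_of_exponent_le (μ := μ) (f := g) (p := 1) (q := p) one_pos hp
    hg.aestronglyMeasurable
  simp only [eLpNorm', enorm_eq_self, ENNReal.rpow_one, div_one] at h
  have hp0 : 0 < p := by linarith
  calc (∫⁻ x, g x ∂μ) ^ p ≤ ((∫⁻ x, g x ^ p ∂μ) ^ (1 / p)) ^ p := by gcongr
    _ = _ := by rw [← ENNReal.rpow_mul, one_div, inv_mul_cancel₀ hp0.ne', ENNReal.rpow_one]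

lemma jensen_sq {α : Type*} [MeasurableSpace α] (μ : Measure α) [IsProbabilityMeasure μ]
    {g : α → ℝ≥0∞} (hg : AEMeasurable g μ) :
    (∫⁻ x, g x ∂μ) ^ 2 ≤ ∫⁻ x, g x ^ 2 ∂μ := by
  have := jensen_rpow μ (p := 2) (by norm_num) hg
  simpa only [ENNReal.rpow_two] using this

lemma seg_ineq {n : ℕ} {f : Euc n → ℝ} (hf : ContDiff ℝ 1 f) (x y : Euc n) :
    ‖f x - f y‖ₑ ^ 2 ≤
      ‖y - x‖ₑ ^ 2 * ∫⁻ t in Ioc (0 : ℝ) 1, ‖fderiv ℝ f (x + t • (y - x))‖ₑ ^ 2 := by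
  have hc : Continuous fun t : ℝ => fderiv ℝ f (x + t • (y - x)) :=
    (hf.continuous_fderiv (by norm_num)).comp (by fun_prop)
  have h1 : ∫ t in (0 : ℝ)..1, fderiv ℝ f (x + t • (y - x)) (y - x) = f y - f x := by
    have := intervalIntegral.integral_eq_sub_of_hasDerivAt (a := 0) (b := 1)
      (f := fun t : ℝ => f (x + t • (y - x)))
      (f' := fun t : ℝ => fderiv ℝ f (x + t • (y - x)) (y - x)) ?_ ?_
    · simpa using this
    · intro t _
      have hd : HasFDerivAt f (fderiv ℝ f (x + t • (y - x))) (x + t • (y - x)) :=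
        (hf.differentiable (by norm_num) _).hasFDerivAt
      have hg : HasDerivAt (fun t : ℝ => x + t • (y - x)) (y - x) t := by
        simpa using ((hasDerivAt_id t).smul_const (y - x)).const_add x
      exact hd.comp_hasDerivAt t hg
    · apply Continuous.intervalIntegrable
      fun_prop
  have hpr : IsProbabilityMeasure (volume.restrict (Ioc (0 : ℝ) 1)) := ⟨by simp⟩
  calc ‖f x - f y‖ₑ ^ 2 = ‖f y - f x‖ₑ ^ 2 := by rw [← enorm_neg, neg_sub]
    _ ≤ (∫⁻ t in Ioc (0 : ℝ) 1, ‖y - x‖ₑ * ‖fderiv ℝ f (x + t • (y - x))‖ₑ) ^ 2 := by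
        gcongr
        rw [← h1, intervalIntegral.integral_of_le zero_le_one]
        refine (enorm_integral_le_lintegral_enorm _).trans (lintegral_mono fun t => ?_)
        rw [mul_comm]
        exact ContinuousLinearMap.le_opENorm _ _
    _ ≤ ∫⁻ t in Ioc (0 : ℝ) 1, (‖y - x‖ₑ * ‖fderiv ℝ f (x + t • (y - x))‖ₑ) ^ 2 := by
        apply jensen_sq
        exact (hc.enorm.measurable.const_mul _).aemeasurable
    _ = _ := by
        simp_rw [mul_pow]
        rw [lintegral_const_mul]
        exact (hc.enorm.measurable.pow_const _)

lemma A1_scale {n : ℕ} {W : Euc n → ℝ≥0∞} (hW : Measurable W) {A : ℝ≥0∞} {z : Euc n}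
    (h : ∀ r : ℝ, 0 < r → ∫⁻ x in ball z r, W x ≤ A * volume (ball z r) * W z)
    {t R : ℝ} (ht : 0 < t) (hR : 0 < R) :
    ∫⁻ h in ball (0 : Euc n) R, W (z - t • h) ≤ A * volume (ball (0 : Euc n) R) * W z := by
  have ht' : (-t) ≠ 0 := by linarith
  have e1 : ∫⁻ h in ball (0 : Euc n) R, W (z - t • h) =
      ∫⁻ y in ball (0 : Euc n) (t * R), W (z + y) ∂(Measure.map (fun x : Euc n => (-t) • x) volume) := by
    rw [setLIntegral_map measurableSet_ball (by fun_prop) (by fun_prop)]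
    congr 1
    · congr 1
      ext y
      simp [norm_smul, abs_of_pos ht, ht]
    · ext y
      simp [sub_eq_add_neg]
  have e2 : ∫⁻ y in ball (0 : Euc n) (t * R), W (z + y) = ∫⁻ y in ball z (t * R), W y := by
    rw [← lintegral_indicator measurableSet_ball, ← lintegral_indicator measurableSet_ball]
    conv_rhs => rw [← lintegral_add_left_eq_self _ z]
    congr 1; ext y
    simp only [indicator, mem_ball, dist_zero_right, dist_self_add_left]
  rw [e1, Measure.map_addHaar_smul _ ht', setLIntegral_smul_measure, e2]
  have h2 := h (t * R) (by positivity)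
  rw [Measure.addHaar_ball_mul_of_pos _ _ ht] at h2
  calc _ ≤ ENNReal.ofReal |((-t) ^ Module.finrank ℝ (Euc n))⁻¹| * (A *
        (ENNReal.ofReal (t ^ Module.finrank ℝ (Euc n)) * volume (ball (0 : Euc n) R)) * W z) := by
        rw [smul_eq_mul]; gcongr
    _ = (ENNReal.ofReal |((-t) ^ Module.finrank ℝ (Euc n))⁻¹| *
        ENNReal.ofReal (t ^ Module.finrank ℝ (Euc n))) * (A * volume (ball (0 : Euc n) R) * W z) := by
        ring
    _ = _ := by
        rw [← ENNReal.ofReal_mul (abs_nonneg _), abs_inv, abs_pow, abs_neg, abs_of_pos ht,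
          inv_mul_cancel₀ (by positivity), ENNReal.ofReal_one, one_mul]

/-- Weighted Poincaré inequality for smooth functions. -/
lemma poincare {n : ℕ} {W : Euc n → ℝ≥0∞} (hW : Measurable W) {A : ℝ≥0∞} (hA : A1 W A)
    {f : Euc n → ℝ} (hf : ContDiff ℝ 1 f) (c : Euc n) {R : ℝ} (hR : 0 < R) :
    ∫⁻ x in ball c R, ∫⁻ y in ball c R, ‖f x - f y‖ₑ ^ 2 * W x ≤
      ENNReal.ofReal (2 * R) ^ 2 * (A * volume (ball (0 : Euc n) (2 * R))) *
        ∫⁻ z in ball c R, ‖fderiv ℝ f z‖ₑ ^ 2 * W z := by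
  set G : Euc n → ℝ≥0∞ := (ball c R).indicator fun z => ‖fderiv ℝ f z‖ₑ ^ 2 with hG
  have hfc : Continuous fun z => fderiv ℝ f z := hf.continuous_fderiv (by norm_num)
  have hGm : Measurable G :=
    (hfc.enorm.measurable.pow_const _).indicator measurableSet_ball
  set V := ball (0 : Euc n) (2 * R) with hV
  set K : ℝ≥0∞ := ENNReal.ofReal (2 * R) ^ 2
  -- pointwise
  have step1 : ∫⁻ x in ball c R, ∫⁻ y in ball c R, ‖f x - f y‖ₑ ^ 2 * W x ≤
      ∫⁻ x, ∫⁻ h in V, ∫⁻ t in Ioc (0 : ℝ) 1, K * G (x + t • h) * W x := by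
    refine (setLIntegral_mono' measurableSet_ball ?_).trans (setLIntegral_le_lintegral _ _)
    intro x hx
    rw [← lintegral_indicator measurableSet_ball, ← lintegral_indicator measurableSet_ball,
      ← lintegral_add_left_eq_self _ x]
    refine lintegral_mono fun h => ?_
    by_cases hy : x + h ∈ ball c R
    · have hh : h ∈ V := by
        have : dist (x + h) x ≤ dist (x + h) c + dist x c := dist_triangle_right _ _ _
        simp only [mem_ball, hV, dist_zero_right, dist_self_add_left] at *
        linarith
      rw [indicator_of_mem hy, indicator_of_mem hh]
      have hs := seg_ineq hf x (x + h)
      rw [add_sub_cancel_left] at hs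
      have hK : ‖h‖ₑ ^ 2 ≤ K := by
        refine pow_le_pow_left' ?_ 2
        rw [← ofReal_norm_eq_enorm]
        apply ENNReal.ofReal_le_ofReal
        simp only [hV, mem_ball, dist_zero_right] at hh
        exact hh.le
      have hGe : ∫⁻ t in Ioc (0 : ℝ) 1, ‖fderiv ℝ f (x + t • h)‖ₑ ^ 2 =
          ∫⁻ t in Ioc (0 : ℝ) 1, G (x + t • h) := by
        refine setLIntegral_congr_fun measurableSet_Ioc fun t ht => ?_
        have hm : x + t • h ∈ ball c R := by
          have := (convex_ball c R).add_smul_mem hx hy ⟨ht.1.le, ht.2⟩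
          exact this
        simp [hG, indicator_of_mem hm]
      calc ‖f x - f (x + h)‖ₑ ^ 2 * W x ≤ (K * ∫⁻ t in Ioc (0 : ℝ) 1, G (x + t • h)) * W x := by
            rw [← hGe]
            gcongr
            exact hs.trans (by gcongr)
        _ = _ := by
            rw [← lintegral_const_mul _ (by fun_prop), ← lintegral_mul_const _ (by fun_prop)]
    · rw [indicator_of_notMem hy]; exact zero_le
  refine step1.trans ?_
  have step2 : ∫⁻ x, ∫⁻ h in V, ∫⁻ t in Ioc (0 : ℝ) 1, K * G (x + t • h) * W x =
      ∫⁻ t in Ioc (0 : ℝ) 1, ∫⁻ h in V, ∫⁻ x, K * G (x + t • h) * W x := by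
    have : ∀ x, ∫⁻ h in V, ∫⁻ t in Ioc (0 : ℝ) 1, K * G (x + t • h) * W x =
        ∫⁻ t in Ioc (0 : ℝ) 1, ∫⁻ h in V, K * G (x + t • h) * W x := by
      intro x
      rw [lintegral_lintegral_swap]
      apply Measurable.aemeasurable
      unfold Function.uncurry
      fun_prop
    simp_rw [this]
    rw [lintegral_lintegral_swap]
    · refine lintegral_congr fun t => ?_
      rw [lintegral_lintegral_swap]
      apply Measurable.aemeasurable
      unfold Function.uncurry
      fun_prop
    · apply Measurable.aemeasurable
      unfold Function.uncurry
      apply Measurable.lintegral_prod_right'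
        (f := fun q : (Euc n × ℝ) × Euc n => K * G (q.1.1 + q.1.2 • q.2) * W q.1.1)
      fun_prop
  rw [step2]
  have step3 : ∀ t ∈ Ioc (0 : ℝ) 1, ∫⁻ h in V, ∫⁻ x, K * G (x + t • h) * W x ≤
      K * (A * volume V) * ∫⁻ z, G z * W z := by
    intro t ht
    have : ∀ h, ∫⁻ x, K * G (x + t • h) * W x = ∫⁻ z, K * G z * W (z - t • h) := by
      intro h
      conv_rhs => rw [← lintegral_add_right_eq_self _ (t • h)]
      simp
    simp_rw [this]
    rw [lintegral_lintegral_swap, ← lintegral_const_mul _ (by fun_prop)]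
    · refine lintegral_mono_ae ?_
      filter_upwards [hA] with z hz
      rw [lintegral_const_mul _ (by fun_prop)]
      calc _ ≤ K * G z * (A * volume V * W z) := by
            gcongr
            exact A1_scale hW hz ht.1 (by positivity)
        _ = _ := by ring
    · apply Measurable.aemeasurable
      unfold Function.uncurry
      fun_prop
  calc _ ≤ ∫⁻ t in Ioc (0 : ℝ) 1, K * (A * volume V) * ∫⁻ z, G z * W z :=
        setLIntegral_mono' measurableSet_Ioc step3
    _ = K * (A * volume V) * ∫⁻ z, G z * W z := by simp
    _ = _ := by
        congr 1
        rw [← lintegral_indicator measurableSet_ball]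
        congr 1; ext z
        by_cases hz : z ∈ ball c R <;> simp [hG, hz]
end

section
/-- The mollifying bump functions. -/
def bmp (n k : ℕ) : ContDiffBump (0 : Euc n) where
  rIn := 1 / (2 * ((k : ℝ) + 1))
  rOut := 1 / ((k : ℝ) + 1)
  rIn_pos := by positivity
  rIn_lt_rOut := by
    apply one_div_lt_one_div_of_lt <;> [positivity; skip]
    have : (0 : ℝ) ≤ k := by positivity
    linarith

/-- The mollifying kernel. -/
def mker (n k : ℕ) : Euc n → ℝ := (bmp n k).normed volume

open scoped Convolution in
/-- Mollification. -/
def moll {n : ℕ} {F : Type*} [NormedAddCommGroup F] [NormedSpace ℝ F] (k : ℕ) (g : Euc n → F) :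
    Euc n → F := (bmp n k).normed volume ⋆[ContinuousLinearMap.lsmul ℝ ℝ, volume] g

lemma bmp_rOut (n k : ℕ) : (bmp n k).rOut = 1 / ((k : ℝ) + 1) := rfl

lemma bmp_rOut_le (n k : ℕ) : (bmp n k).rOut ≤ 1 := by
  rw [bmp_rOut, div_le_one (by positivity)]
  have : (0 : ℝ) ≤ k := by positivity
  linarith

lemma bmp_tendsto (n : ℕ) : Tendsto (fun k => (bmp n k).rOut) atTop (𝓝 0) := by
  simp_rw [bmp_rOut]
  exact tendsto_one_div_add_atTop_nhds_zero_nat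

lemma bmp_ratio (n k : ℕ) : (bmp n k).rOut ≤ 2 * (bmp n k).rIn := by
  have : (0 : ℝ) < (k : ℝ) + 1 := by positivity
  simp only [bmp]
  field_simp
  rfl

lemma ker_nonneg (n k : ℕ) (x : Euc n) : 0 ≤ mker n k x := (bmp n k).nonneg_normed x

lemma ker_cont (n k : ℕ) : Continuous (mker n k) := (bmp n k).continuous_normed

lemma ker_smooth (n k : ℕ) : ContDiff ℝ (⊤ : ℕ∞) (mker n k) := (bmp n k).contDiff_normed

lemma ker_compact (n k : ℕ) : HasCompactSupport (mker n k) := (bmp n k).hasCompactSupport_normed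

lemma ker_zero {n k : ℕ} {x : Euc n} (h : (bmp n k).rOut ≤ ‖x‖) : mker n k x = 0 := by
  by_contra h0
  have : x ∈ Function.support ((bmp n k).normed volume) := h0
  rw [ContDiffBump.support_normed_eq] at this
  simp only [mem_ball, dist_zero_right] at this
  linarith

lemma ker_integral (n k : ℕ) : ∫ x, mker n k x = 1 := (bmp n k).integral_normed

section
variable {n : ℕ} {F : Type*} [NormedAddCommGroup F] [NormedSpace ℝ F]

lemma moll_apply (k : ℕ) (g : Euc n → F) (x : Euc n) :
    moll k g x = ∫ y, mker n k (x - y) • g y := by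
  simp only [moll, convolution_eq_swap]
  rfl

lemma ker_mul_integrable (k : ℕ) {g : Euc n → F} (hg : LocallyIntegrable g) (x : Euc n) :
    Integrable fun y => mker n k (x - y) • g y := by
  have hc : Continuous fun y => mker n k (x - y) := (ker_cont n k).comp (by fun_prop)
  refine hg.integrable_smul_left_of_hasCompactSupport hc ?_
  refine HasCompactSupport.of_support_subset_isCompact (isCompact_closedBall x (bmp n k).rOut) ?_
  intro y hy
  by_contra hy2
  apply hy
  apply ker_zero
  simp only [mem_closedBall, not_le, dist_eq_norm] at hy2
  rw [norm_sub_rev]; exact hy2.le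

lemma moll_sub (k : ℕ) {f g : Euc n → F} (hf : LocallyIntegrable f) (hg : LocallyIntegrable g) :
    moll k (f - g) = moll k f - moll k g := by
  ext1 x
  simp only [moll_apply, Pi.sub_apply, smul_sub]
  rw [integral_sub (ker_mul_integrable k hf x) (ker_mul_integrable k hg x)]

lemma ker_lintegral (k : ℕ) (x : Euc n) : ∫⁻ y, ENNReal.ofReal (mker n k (x - y)) = 1 := by
  rw [lintegral_sub_left_eq_self (fun y => ENNReal.ofReal (mker n k y)) x,
    ← ofReal_integral_eq_lintegral_ofReal, ker_integral, ENNReal.ofReal_one]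
  · exact (bmp n k).integrable_normed
  · exact Eventually.of_forall (ker_nonneg n k)

lemma moll_rpow_le (k : ℕ) {p : ℝ} (hp : 1 ≤ p) {g : Euc n → F} (hg : AEStronglyMeasurable g)
    (x : Euc n) :
    ‖moll k g x‖ₑ ^ p ≤ ∫⁻ y, ENNReal.ofReal (mker n k (x - y)) * ‖g y‖ₑ ^ p := by
  have hm : Measurable fun y => ENNReal.ofReal (mker n k (x - y)) :=
    ((ker_cont n k).measurable.comp (by fun_prop)).ennreal_ofReal
  set ν := (volume : Measure (Euc n)).withDensity fun y => ENNReal.ofReal (mker n k (x - y)) with hν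
  have hpr : IsProbabilityMeasure ν := ⟨by
    rw [hν, withDensity_apply _ MeasurableSet.univ, setLIntegral_univ, ker_lintegral]⟩
  have hac : ν ≪ volume := withDensity_absolutelyContinuous _ _
  have key : ∀ q : ℝ, ∫⁻ y, ENNReal.ofReal (mker n k (x - y)) * ‖g y‖ₑ ^ q =
      ∫⁻ y, ‖g y‖ₑ ^ q ∂ν := by
    intro q
    rw [hν, lintegral_withDensity_eq_lintegral_mul₀ hm.aemeasurable (hg.enorm.pow_const q)]
    rfl
  rw [key]
  refine le_trans ?_ (jensen_rpow ν hp (hg.mono_ac hac).enorm)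
  gcongr
  have := key 1
  simp only [ENNReal.rpow_one] at this
  rw [← this, moll_apply]
  refine (enorm_integral_le_lintegral_enorm _).trans (lintegral_mono fun y => ?_)
  rw [enorm_smul, Real.enorm_of_nonneg (ker_nonneg _ _ _)]

lemma ker_le (k : ℕ) (x y : Euc n) :
    ENNReal.ofReal (mker n k (x - y)) ≤
      (2 ^ n / volume (ball y (bmp n k).rOut)) * (ball y (bmp n k).rOut).indicator 1 x := by
  by_cases hx : x ∈ ball y (bmp n k).rOut
  · rw [indicator_of_mem hx]
    have h := (bmp n k).normed_le_div_measure_closedBall_rOut volume 2 (bmp_ratio n k) (x - y)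
    have hv : volume (ball y (bmp n k).rOut) = volume (closedBall (0 : Euc n) (bmp n k).rOut) := by
      rw [Measure.addHaar_closedBall _ _ (bmp n k).rOut_pos.le,
        Measure.addHaar_ball_of_pos _ _ (bmp n k).rOut_pos]
    rw [hv, Pi.one_apply, mul_one]
    refine (ENNReal.ofReal_le_ofReal h).trans (le_of_eq ?_)
    have hpos : 0 < volume.real (closedBall (0 : Euc n) (bmp n k).rOut) :=
      ENNReal.toReal_pos (measure_closedBall_pos _ _ (bmp n k).rOut_pos).ne'
        measure_closedBall_lt_top.ne
    rw [ENNReal.ofReal_div_of_pos hpos, Measure.real,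
      ENNReal.ofReal_toReal measure_closedBall_lt_top.ne, ENNReal.ofReal_pow (by norm_num)]
    simp
  · rw [ker_zero]
    · simp
    · simpa [dist_eq_norm] using hx

lemma moll_energy (k : ℕ) {p : ℝ} (hp : 1 ≤ p) {W : Euc n → ℝ≥0∞} (hW : Measurable W)
    {A : ℝ≥0∞} (hA : A1 W A) {g : Euc n → F} (hg : AEStronglyMeasurable g) :
    ∫⁻ x, ‖moll k g x‖ₑ ^ p * W x ≤ 2 ^ n * A * ∫⁻ x, ‖g x‖ₑ ^ p * W x := by
  have hkm : Measurable fun q : Euc n × Euc n => ENNReal.ofReal (mker n k (q.1 - q.2)) :=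
    ((ker_cont n k).measurable.comp (by fun_prop)).ennreal_ofReal
  have hkx : ∀ x, Measurable fun y : Euc n => ENNReal.ofReal (mker n k (x - y)) := fun x =>
    ((ker_cont n k).measurable.comp (by fun_prop)).ennreal_ofReal
  have hky : ∀ y, Measurable fun x : Euc n => ENNReal.ofReal (mker n k (x - y)) := fun x =>
    ((ker_cont n k).measurable.comp (by fun_prop)).ennreal_ofReal
  have hgp : AEMeasurable (fun y => ‖g y‖ₑ ^ p) := hg.enorm.pow_const p
  calc ∫⁻ x, ‖moll k g x‖ₑ ^ p * W x
      ≤ ∫⁻ x, ∫⁻ y, ENNReal.ofReal (mker n k (x - y)) * ‖g y‖ₑ ^ p * W x := by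
        refine lintegral_mono fun x => ?_
        have hh : AEMeasurable fun y => ENNReal.ofReal (mker n k (x - y)) * ‖g y‖ₑ ^ p :=
          (hkx x).aemeasurable.mul hgp
        rw [lintegral_mul_const'' _ hh]
        gcongr
        exact moll_rpow_le k hp hg x
    _ = ∫⁻ y, ∫⁻ x, ENNReal.ofReal (mker n k (x - y)) * ‖g y‖ₑ ^ p * W x := by
        rw [lintegral_lintegral_swap]
        exact (hkm.aemeasurable.mul hgp.comp_snd).mul (hW.comp measurable_fst).aemeasurable
    _ ≤ ∫⁻ y, 2 ^ n * A * (‖g y‖ₑ ^ p * W y) := by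
        refine lintegral_mono_ae ?_
        filter_upwards [hA] with y hy
        have hr := (bmp n k).rOut_pos
        have hb := hy _ hr
        set B := ball y (bmp n k).rOut with hB
        have hB0 : volume B ≠ 0 := (measure_ball_pos _ _ hr).ne'
        have hBt : volume B ≠ ⊤ := measure_ball_lt_top.ne
        calc ∫⁻ x, ENNReal.ofReal (mker n k (x - y)) * ‖g y‖ₑ ^ p * W x
            ≤ ∫⁻ x, (2 ^ n / volume B * ‖g y‖ₑ ^ p) * B.indicator W x := by
              refine lintegral_mono fun x => ?_
              calc _ ≤ (2 ^ n / volume B * B.indicator 1 x) * ‖g y‖ₑ ^ p * W x := by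
                    gcongr; exact ker_le k x y
                _ = _ := by
                    by_cases hx : x ∈ B <;> simp [hx]
          _ = (2 ^ n / volume B * ‖g y‖ₑ ^ p) * ∫⁻ x in B, W x := by
              rw [lintegral_const_mul _ (hW.indicator measurableSet_ball),
                lintegral_indicator measurableSet_ball]
          _ ≤ (2 ^ n / volume B * ‖g y‖ₑ ^ p) * (A * volume B * W y) := by gcongr
          _ = ((volume B)⁻¹ * volume B) * (2 ^ n * A * (‖g y‖ₑ ^ p * W y)) := by
              rw [div_eq_mul_inv]; ring
          _ = _ := by rw [ENNReal.inv_mul_cancel hB0 hBt, one_mul]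
    _ = _ := by
        have hh : AEMeasurable fun y => ‖g y‖ₑ ^ p * W y := hgp.mul hW.aemeasurable
        rw [lintegral_const_mul'' _ hh]

lemma eLpNorm_withDensity {p : ℝ≥0∞} (hp : 1 ≤ p) (hpt : p ≠ ⊤) {W : Euc n → ℝ≥0∞}
    (hW : Measurable W) {g : Euc n → F} (hg : AEStronglyMeasurable g) :
    eLpNorm g p (volume.withDensity W) =
      (∫⁻ x, ‖g x‖ₑ ^ p.toReal * W x) ^ (1 / p.toReal) := by
  rw [eLpNorm_eq_lintegral_rpow_enorm_toReal (by positivity) hpt,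
    lintegral_withDensity_eq_lintegral_mul₀ hW.aemeasurable (hg.enorm.pow_const _)]
  simp_rw [Pi.mul_apply, mul_comm]

variable [CompleteSpace F]

lemma moll_contDiff (k : ℕ) {g : Euc n → F} (hg : LocallyIntegrable g) :
    ContDiff ℝ (⊤ : ℕ∞) (moll k g) :=
  HasCompactSupport.contDiff_convolution_left _ (ker_compact n k) (ker_smooth n k) hg

lemma moll_cc_tendsto {p : ℝ≥0∞} (hp : 1 ≤ p) (hpt : p ≠ ⊤) (μ : Measure (Euc n))
    [IsLocallyFiniteMeasure μ] {g : Euc n → F} (hg : Continuous g) (hgc : HasCompactSupport g) :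
    Tendsto (fun k => eLpNorm (moll k g - g) p μ) atTop (𝓝 0) := by
  have hu : UniformContinuous g := hgc.uniformContinuous_of_continuous hg
  set S := cthickening 1 (tsupport g) with hS
  have hSc : IsCompact S := hgc.isCompact.cthickening
  have hSm : MeasurableSet S := isClosed_cthickening.measurableSet
  set M := μ S ^ (1 / p.toReal) with hM
  have hMt : M ≠ ⊤ := ENNReal.rpow_ne_top_of_nonneg (by positivity) hSc.measure_lt_top.ne
  have key : ∀ ε : ℝ≥0, 0 < ε → ∀ᶠ k in atTop, eLpNorm (moll k g - g) p μ ≤ ε * M := by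
    intro ε hε
    obtain ⟨δ, hδ, hd⟩ := Metric.uniformContinuous_iff.1 hu ε (by exact_mod_cast hε)
    have := (bmp_tendsto n).eventually (gt_mem_nhds hδ)
    filter_upwards [this] with k hk
    have hpt' : ∀ x, ‖(moll k g - g) x‖ₑ ≤ ‖S.indicator (fun _ => (ε : ℝ)) x‖ₑ := by
      intro x
      by_cases hx : x ∈ S
      · rw [indicator_of_mem hx]
        have h1 : dist (moll k g x) (g x) ≤ ε := by
          refine ContDiffBump.dist_normed_convolution_le hg.aestronglyMeasurable fun y hy => ?_
          exact (hd (lt_trans hy hk)).le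
        rw [enorm_le_iff_norm_le, Pi.sub_apply, ← dist_eq_norm]
        simpa using h1
      · have h0 : ∀ y ∈ ball x (bmp n k).rOut, g y = 0 := by
          intro y hy
          by_contra h0
          apply hx
          refine mem_cthickening_of_dist_le x y 1 _ (subset_tsupport g h0) ?_
          rw [dist_comm]
          exact (mem_ball.1 hy).le.trans (bmp_rOut_le n k)
        have hx0 : g x = 0 := h0 x (mem_ball_self (bmp n k).rOut_pos)
        have : moll k g x = g x := by
          refine ContDiffBump.normed_convolution_eq_right fun y hy => ?_
          rw [h0 y hy, hx0]
        simp [this]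
    calc eLpNorm (moll k g - g) p μ ≤ eLpNorm (S.indicator (fun _ => (ε : ℝ))) p μ :=
          eLpNorm_mono_enorm hpt'
      _ ≤ ε * M := by
          refine (eLpNorm_indicator_const_le _ _).trans (le_of_eq ?_)
          congr 1
          simp
  rw [ENNReal.tendsto_nhds_zero]
  intro η hη
  have : ∃ ε : ℝ≥0, 0 < ε ∧ (ε : ℝ≥0∞) * M ≤ η := by
    have h1 : Tendsto (fun ε : ℝ≥0 => (ε : ℝ≥0∞) * M) (𝓝[>] 0) (𝓝 0) := by
      have : Tendsto (fun ε : ℝ≥0 => (ε : ℝ≥0∞) * M) (𝓝 0) (𝓝 ((0 : ℝ≥0) * M)) :=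
        ENNReal.Tendsto.mul_const (ENNReal.tendsto_coe.2 tendsto_id) (Or.inr hMt)
      simp only [ENNReal.coe_zero, zero_mul] at this
      exact this.mono_left nhdsWithin_le_nhds
    obtain ⟨ε, h2, h3⟩ := ((h1.eventually (ge_mem_nhds hη)).and self_mem_nhdsWithin).exists
    exact ⟨ε, h3, h2⟩
  obtain ⟨ε, hε, hle⟩ := this
  filter_upwards [key ε hε] with k hk using hk.trans hle

lemma moll_tendsto {p : ℝ≥0∞} (hp : 1 ≤ p) (hpt : p ≠ ⊤) {W : Euc n → ℝ≥0∞} (hW : Measurable W)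
    {A : ℝ≥0∞} (hAt : A ≠ ⊤) (hA : A1 W A) [IsLocallyFiniteMeasure (volume.withDensity W)]
    {f : Euc n → F} (hf : LocallyIntegrable f) (hfp : MemLp f p (volume.withDensity W)) :
    Tendsto (fun k => eLpNorm (moll k f - f) p (volume.withDensity W)) atTop (𝓝 0) := by
  set μ := (volume : Measure (Euc n)).withDensity W with hμ
  have hac : μ ≪ volume := withDensity_absolutelyContinuous _ _
  have hp1 : 1 ≤ p.toReal := by
    rw [← ENNReal.toReal_one]; exact ENNReal.toReal_mono hpt hp
  set D : ℝ≥0∞ := (2 ^ n * A) ^ (1 / p.toReal) with hD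
  have hDt : D ≠ ⊤ := ENNReal.rpow_ne_top_of_nonneg (by positivity)
    (ENNReal.mul_ne_top (by simp) hAt)
  have bd : ∀ k, ∀ g : Euc n → F, LocallyIntegrable g → eLpNorm (moll k g) p μ ≤ D * eLpNorm g p μ := by
    intro k g hg
    rw [eLpNorm_withDensity hp hpt hW hg.aestronglyMeasurable,
      eLpNorm_withDensity hp hpt hW (moll_contDiff k hg).continuous.aestronglyMeasurable, hD,
      ← ENNReal.mul_rpow_of_nonneg _ _ (by positivity)]
    gcongr
    exact moll_energy k hp1 hW hA hg.aestronglyMeasurable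
  rw [ENNReal.tendsto_nhds_zero]
  intro η hη
  have : ∃ ε : ℝ≥0, 0 < ε ∧ (D + 2) * (ε : ℝ≥0∞) ≤ η := by
    have h1 : Tendsto (fun ε : ℝ≥0 => (D + 2) * (ε : ℝ≥0∞)) (𝓝[>] 0) (𝓝 0) := by
      have : Tendsto (fun ε : ℝ≥0 => (D + 2) * (ε : ℝ≥0∞)) (𝓝 0) (𝓝 ((D + 2) * (0 : ℝ≥0))) :=
        ENNReal.Tendsto.const_mul (ENNReal.tendsto_coe.2 tendsto_id)
          (Or.inr (ENNReal.add_ne_top.2 ⟨hDt, by simp⟩))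
      simp only [ENNReal.coe_zero, mul_zero] at this
      exact this.mono_left nhdsWithin_le_nhds
    obtain ⟨ε, h2, h3⟩ := ((h1.eventually (ge_mem_nhds hη)).and self_mem_nhdsWithin).exists
    exact ⟨ε, h3, h2⟩
  obtain ⟨ε, hε, hle⟩ := this
  obtain ⟨g, hgc, hge, hgcont, hgm⟩ := hfp.exists_hasCompactSupport_eLpNorm_sub_le hpt
    (ε := (ε : ℝ≥0∞)) (by exact_mod_cast hε.ne')
  have hgl : LocallyIntegrable g := hgcont.locallyIntegrable
  have hεpos : (0 : ℝ≥0∞) < ε := by exact_mod_cast hε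
  filter_upwards [(moll_cc_tendsto hp hpt μ hgcont hgc).eventually (ge_mem_nhds hεpos)] with k hk
  have e : moll k f - f = moll k (f - g) + ((moll k g - g) - (f - g)) := by
    rw [moll_sub k hf hgl]; abel
  have m1 : AEStronglyMeasurable (moll k (f - g)) μ :=
    (moll_contDiff k (hf.sub hgl)).continuous.aestronglyMeasurable
  have m2 : AEStronglyMeasurable (moll k g - g) μ :=
    ((moll_contDiff k hgl).continuous.sub hgcont).aestronglyMeasurable
  have m3 : AEStronglyMeasurable (f - g) μ := hfp.1.sub hgm.1
  calc eLpNorm (moll k f - f) p μ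
      ≤ eLpNorm (moll k (f - g)) p μ + eLpNorm ((moll k g - g) - (f - g)) p μ := by
        rw [e]; exact eLpNorm_add_le m1 (m2.sub m3) hp
    _ ≤ D * ε + (ε + ε) := by
        gcongr
        · exact (bd k _ (hf.sub hgl)).trans (by gcongr)
        · exact (eLpNorm_sub_le m2 m3 hp).trans (by gcongr)
    _ = (D + 2) * ε := by ring
    _ ≤ η := hle

lemma moll_ae {f : Euc n → F} (hf : LocallyIntegrable f) :
    ∀ᵐ x, Tendsto (fun k => moll k f x) atTop (𝓝 (f x)) :=
  ContDiffBump.ae_convolution_tendsto_right_of_locallyIntegrable (K := 2) (bmp_tendsto n)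
    (Eventually.of_forall (bmp_ratio n)) hf

end
end

section
lemma vol_ball_eq {n : ℕ} (z : Euc n) {r : ℝ} (hr : 0 < r) :
    volume (ball z r) = ENNReal.ofReal (r ^ n * volume.real (ball (0 : Euc n) 1)) := by
  rw [Measure.addHaar_ball_of_pos _ _ hr, ENNReal.ofReal_mul (by positivity), Measure.real,
    ENNReal.ofReal_toReal measure_ball_lt_top.ne, finrank_euclideanSpace, Fintype.card_fin]

lemma kap_pos (n : ℕ) : 0 < volume.real (ball (0 : Euc n) 1) :=
  ENNReal.toReal_pos (measure_ball_pos _ _ one_pos).ne' measure_ball_lt_top.ne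

lemma strip_vol {n : ℕ} {d C₀ : ℝ} (hd0 : 0 < d) (hC₀ : 1 ≤ C₀) {Γ : Set (Euc n)}
    (hne : Γ.Nonempty) (hcl : IsClosed Γ) (hreg : AhlforsRegular n d C₀ Γ) :
    ∃ S : ℝ, 0 < S ∧ ∀ γ ∈ Γ, ∀ R s : ℝ, 0 < s → s ≤ R →
      volume (ball γ R ∩ {x | infDist x Γ < s}) ≤ ENNReal.ofReal (S * R ^ d * s ^ ((n : ℝ) - d)) := by
  have hκ := kap_pos n
  set κ := volume.real (ball (0 : Euc n) 1) with hκd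
  refine ⟨C₀ ^ 2 * 3 ^ d * (5 ^ n * κ), by positivity, ?_⟩
  intro γ hγ R s hs hsR
  have hR : 0 < R := by linarith
  obtain ⟨u, hut, hdis, hcov⟩ := Vitali.exists_disjoint_subfamily_covering_enlargement_closedBall
    (Γ ∩ ball γ (2 * R)) (fun x => x) (fun _ => s) s (fun _ _ => le_rfl) 5 (by norm_num)
  -- counting
  have hcount : ∀ F : Finset (Euc n), (F : Set (Euc n)) ⊆ u →
      (F.card : ℝ) ≤ C₀ ^ 2 * 3 ^ d * (R ^ d / s ^ d) := by
    intro F hF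
    have h1 : (F.card : ℝ≥0∞) * ENNReal.ofReal (C₀⁻¹ * s ^ d) ≤
        ENNReal.ofReal (C₀ * (3 * R) ^ d) := by
      calc (F.card : ℝ≥0∞) * ENNReal.ofReal (C₀⁻¹ * s ^ d)
          = ∑ q ∈ F, ENNReal.ofReal (C₀⁻¹ * s ^ d) := by simp
        _ ≤ ∑ q ∈ F, μH[d] (Γ ∩ ball q s) := by
            refine Finset.sum_le_sum fun q hq => ?_
            exact (hreg q (hut (hF hq)).1 s hs).1
        _ = μH[d] (⋃ q ∈ F, Γ ∩ ball q s) := by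
            rw [measure_biUnion_finset]
            · intro a ha b hb hab
              exact (hdis (hF ha) (hF hb) hab).mono
                (inter_subset_right.trans ball_subset_closedBall)
                (inter_subset_right.trans ball_subset_closedBall)
            · intro q _
              exact hcl.measurableSet.inter measurableSet_ball
        _ ≤ μH[d] (Γ ∩ ball γ (3 * R)) := by
            apply measure_mono
            intro y hy
            simp only [mem_iUnion] at hy
            obtain ⟨q, hq, hyΓ, hyq⟩ := hy
            refine ⟨hyΓ, ?_⟩
            have h2 := (hut (hF hq)).2
            have := dist_triangle y q γ
            simp only [mem_ball] at *
            linarith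
        _ ≤ _ := (hreg γ hγ (3 * R) (by positivity)).2
    rw [← ENNReal.ofReal_natCast, ← ENNReal.ofReal_mul (by positivity),
      ENNReal.ofReal_le_ofReal_iff (by positivity)] at h1
    have hsd : 0 < s ^ d := by positivity
    rw [Real.mul_rpow (by norm_num) hR.le] at h1
    have h3 : (F.card : ℝ) * s ^ d ≤ C₀ ^ 2 * 3 ^ d * R ^ d := by
      have hc : C₀ * (F.card * (C₀⁻¹ * s ^ d)) = F.card * s ^ d := by field_simp
      rw [← hc]
      calc C₀ * (F.card * (C₀⁻¹ * s ^ d)) ≤ C₀ * (C₀ * (3 ^ d * R ^ d)) := by gcongr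
        _ = _ := by ring
    rw [← mul_div_assoc, le_div_iff₀ hsd]
    exact h3
  have hfin : u.Finite := by
    by_contra hinf
    obtain ⟨N, hN⟩ := exists_nat_gt (C₀ ^ 2 * 3 ^ d * (R ^ d / s ^ d))
    obtain ⟨F, hF, hc⟩ := Set.Infinite.exists_subset_card_eq hinf N
    have := hcount F hF
    rw [hc] at this
    linarith
  set F := hfin.toFinset with hFd
  have hFc := hcount F (by simp [hFd])
  calc volume (ball γ R ∩ {x | infDist x Γ < s})
      ≤ volume (⋃ q ∈ F, closedBall q (5 * s)) := by
        apply measure_mono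
        rintro x ⟨hx, hxs⟩
        obtain ⟨p, hp, hxp⟩ := (infDist_lt_iff hne).1 hxs
        have hpb : p ∈ ball γ (2 * R) := by
          have := dist_triangle_left p γ x
          simp only [mem_ball] at *
          linarith
        obtain ⟨q, hq, hsub⟩ := hcov p ⟨hp, hpb⟩
        simp only [mem_iUnion]
        exact ⟨q, by simpa [hFd] using hq, hsub (by simpa using hxp.le)⟩
    _ ≤ ∑ q ∈ F, volume (closedBall q (5 * s)) := measure_biUnion_finset_le _ _
    _ = ∑ q ∈ F, ENNReal.ofReal ((5 * s) ^ n * κ) := by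
        refine Finset.sum_congr rfl fun q _ => ?_
        rw [← vol_ball_eq q (by positivity), Measure.addHaar_closedBall _ _ (by positivity),
          Measure.addHaar_ball_of_pos _ q (show (0:ℝ) < 5*s by positivity)]
    _ = ENNReal.ofReal (F.card * ((5 * s) ^ n * κ)) := by
        rw [Finset.sum_const, nsmul_eq_mul, ENNReal.ofReal_mul (Nat.cast_nonneg _), ENNReal.ofReal_natCast]
    _ ≤ _ := by
        apply ENNReal.ofReal_le_ofReal
        calc (F.card : ℝ) * ((5 * s) ^ n * κ)
            ≤ C₀ ^ 2 * 3 ^ d * (R ^ d / s ^ d) * ((5 * s) ^ n * κ) := by gcongr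
          _ = _ := by
              rw [Real.rpow_sub hs, Real.rpow_natCast, mul_pow]
              ring

section
variable {n : ℕ} {d C₀ : ℝ} {Γ : Set (Euc n)}

/-- The weight with values in `ℝ≥0∞`. -/
def wt (n : ℕ) (d : ℝ) (Γ : Set (Euc n)) (x : Euc n) : ℝ≥0∞ := ENNReal.ofReal (weightW n d Γ x)

lemma wt_meas : Measurable (wt n d Γ) := by
  unfold wt weightW
  exact ((measurable_infDist).pow_const _).ennreal_ofReal

lemma measW_eq : measW n d Γ = volume.withDensity (wt n d Γ) := rfl

lemma null_of_strip (hd0 : 0 < d) (hdn : d < (n : ℝ) - 1) (hC₀ : 1 ≤ C₀)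
    (hne : Γ.Nonempty) (hcl : IsClosed Γ) (hreg : AhlforsRegular n d C₀ Γ) : volume Γ = 0 := by
  obtain ⟨S, hS, h⟩ := strip_vol hd0 hC₀ hne hcl hreg
  obtain ⟨γ, hγ⟩ := hne
  have key : ∀ N : ℕ, volume (Γ ∩ ball γ ((N : ℝ) + 1)) = 0 := by
    intro N
    have hN : (0 : ℝ) < (N : ℝ) + 1 := by positivity
    have ht : Tendsto (fun s : ℝ => ENNReal.ofReal (S * ((N : ℝ) + 1) ^ d * s ^ ((n : ℝ) - d)))
        (𝓝[>] 0) (𝓝 0) := by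
      have h1 : Tendsto (fun s : ℝ => s ^ ((n : ℝ) - d)) (𝓝[>] 0) (𝓝 0) := by
        have := (Real.continuousAt_rpow_const 0 ((n : ℝ) - d) (Or.inr (by linarith))).tendsto
        rw [Real.zero_rpow (by linarith)] at this
        exact this.mono_left nhdsWithin_le_nhds
      have := ENNReal.tendsto_ofReal (h1.const_mul (S * ((N : ℝ) + 1) ^ d))
      simpa using this
    refine le_antisymm (ge_of_tendsto ht ?_) zero_le
    have e1 : ∀ᶠ s : ℝ in 𝓝[>] 0, s ≤ (N : ℝ) + 1 :=
      (ge_mem_nhds hN).filter_mono nhdsWithin_le_nhds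
    filter_upwards [self_mem_nhdsWithin, e1] with s hs hsN
    refine (measure_mono ?_).trans (h γ hγ _ s hs hsN)
    rintro x ⟨hx, hxb⟩
    refine ⟨hxb, ?_⟩
    simp only [mem_ofPred_eq, infDist_zero_of_mem hx]
    exact hs
  have hU : Γ ⊆ ⋃ N : ℕ, Γ ∩ ball γ ((N : ℝ) + 1) := by
    intro x hx
    obtain ⟨N, hN⟩ := exists_nat_gt (dist x γ)
    simp only [mem_iUnion]
    exact ⟨N, hx, by simp only [mem_ball]; linarith⟩
  exact measure_mono_null hU (measure_iUnion_null key)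

lemma wt_ball (hd0 : 0 < d) (hdn : d < (n : ℝ) - 1) (hC₀ : 1 ≤ C₀)
    (hne : Γ.Nonempty) (hcl : IsClosed Γ) (hreg : AhlforsRegular n d C₀ Γ) :
    ∃ S : ℝ, 0 < S ∧ ∀ γ ∈ Γ, ∀ ρ : ℝ, 0 < ρ →
      ∫⁻ x in ball γ ρ, wt n d Γ x ≤ ENNReal.ofReal (S * ρ ^ (d + 1)) := by
  obtain ⟨S, hS, h⟩ := strip_vol hd0 hC₀ hne hcl hreg
  set a : ℝ := (n : ℝ) - d - 1 with ha
  have ha0 : 0 < a := by linarith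
  set c : ℝ := S * 2 ^ d * 2 ^ (2 * a + 1) with hc
  have hc0 : 0 < c := by positivity
  refine ⟨c * 2, by positivity, fun γ hγ ρ hρ => ?_⟩
  let q : ℕ → ℝ := fun k => (1 / 2) ^ k
  have hq : ∀ k, 0 < q k := fun k => by positivity
  have hq1 : ∀ k, q k ≤ 1 := fun k => pow_le_one₀ (by norm_num) (by norm_num)
  let T : ℕ → Set (Euc n) := fun k => {x | infDist x Γ < 2 * (q k * ρ)}
  have hT : ∀ k, MeasurableSet (T k) := fun k =>
    measurableSet_lt measurable_infDist measurable_const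
  have hpt : ∀ x ∈ ball γ ρ, wt n d Γ x ≤
      ∑' k, (T k).indicator (fun _ => ENNReal.ofReal ((q k * ρ / 2) ^ (-a))) x := by
    intro x hx
    have hle : infDist x Γ < ρ := (infDist_le_dist_of_mem hγ).trans_lt hx
    rcases (infDist_nonneg (x := x) (s := Γ)).eq_or_lt with h0 | h0
    · have : wt n d Γ x = 0 := by
        unfold wt weightW
        rw [← h0, Real.zero_rpow (by linarith), ENNReal.ofReal_zero]
      rw [this]; exact zero_le
    · obtain ⟨k, hk1, hk2⟩ := exists_nat_pow_near_of_lt_one (x := infDist x Γ / ρ) (y := 1 / 2)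
        (by positivity) (by rw [div_le_one hρ]; exact hle.le) (by norm_num) (by norm_num)
      refine le_trans ?_ (ENNReal.le_tsum k)
      have hk1' : q k * ρ / 2 < infDist x Γ := by
        rw [lt_div_iff₀ hρ, pow_succ] at hk1
        simp only [q]; linarith
      have hk2' : infDist x Γ ≤ q k * ρ := by
        rw [div_le_iff₀ hρ] at hk2
        exact hk2
      have hmem : x ∈ T k := by
        have := mul_pos (hq k) hρ
        simp only [T, mem_ofPred_eq]; linarith
      rw [indicator_of_mem hmem]
      unfold wt weightW
      apply ENNReal.ofReal_le_ofReal
      have : d + 1 - (n : ℝ) = -a := by rw [ha]; ring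
      rw [this]
      exact Real.rpow_le_rpow_of_nonpos (by have := mul_pos (hq k) hρ; linarith) hk1'.le
        (by linarith)
  calc ∫⁻ x in ball γ ρ, wt n d Γ x
      ≤ ∫⁻ x in ball γ ρ,
          ∑' k, (T k).indicator (fun _ => ENNReal.ofReal ((q k * ρ / 2) ^ (-a))) x :=
        setLIntegral_mono' measurableSet_ball hpt
    _ = ∑' k, ∫⁻ x in ball γ ρ,
          (T k).indicator (fun _ => ENNReal.ofReal ((q k * ρ / 2) ^ (-a))) x := by
        rw [lintegral_tsum]
        intro k
        exact (measurable_const.indicator (hT k)).aemeasurable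
    _ ≤ ∑' k, ENNReal.ofReal (c * ρ ^ (d + 1) * q k) := by
        refine ENNReal.tsum_le_tsum fun k => ?_
        have hX : 0 < q k * ρ := mul_pos (hq k) hρ
        rw [lintegral_indicator (hT k), setLIntegral_const, Measure.restrict_apply (hT k)]
        calc _ ≤ ENNReal.ofReal ((q k * ρ / 2) ^ (-a)) *
              ENNReal.ofReal (S * (2 * ρ) ^ d * (2 * (q k * ρ)) ^ ((n : ℝ) - d)) := by
              gcongr
              refine (measure_mono ?_).trans (h γ hγ (2 * ρ) (2 * (q k * ρ)) (by positivity) ?_)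
              · rintro x ⟨h1, h2⟩
                exact ⟨ball_subset_ball (by linarith) h2, h1⟩
              · nlinarith [hq1 k]
          _ = _ := by
              rw [← ENNReal.ofReal_mul (by positivity)]
              congr 1
              have e1 : (n : ℝ) - d = a + 1 := by rw [ha]; ring
              have e2 : (q k * ρ / 2) ^ (-a) = (q k * ρ) ^ (-a) * 2 ^ a := by
                rw [Real.div_rpow hX.le (by norm_num), Real.rpow_neg (by norm_num : (0:ℝ) ≤ 2)]
                field_simp
              have e3 : (2 * (q k * ρ)) ^ (a + 1) = 2 ^ (a + 1) * ((q k * ρ) ^ a * (q k * ρ)) := by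
                rw [Real.mul_rpow (by norm_num) hX.le, Real.rpow_add_one hX.ne']
              have e4 : (q k * ρ) ^ (-a) * (q k * ρ) ^ a = 1 := by
                rw [← Real.rpow_add hX]; simp
              have e5 : (2 : ℝ) ^ (2 * a + 1) = 2 ^ a * 2 ^ (a + 1) := by
                rw [← Real.rpow_add (by norm_num)]; congr 1; ring
              rw [e1, e2, e3, hc, e5, Real.mul_rpow (x := 2) (y := ρ) (by norm_num) hρ.le, Real.rpow_add_one hρ.ne']
              calc _ = ((q k * ρ) ^ (-a) * (q k * ρ) ^ a) *
                    (S * 2 ^ d * (2 ^ a * 2 ^ (a + 1)) * (ρ ^ d * ρ) * q k) := by ring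
                _ = _ := by rw [e4, one_mul]
    _ = ENNReal.ofReal (c * 2 * ρ ^ (d + 1)) := by
        have hsum : HasSum (fun k => c * ρ ^ (d + 1) * q k) (c * ρ ^ (d + 1) * 2) :=
          hasSum_geometric_two.mul_left _
        rw [← ENNReal.ofReal_tsum_of_nonneg (fun k => by have := hq k; positivity) hsum.summable,
          hsum.tsum_eq]
        congr 1; ring

lemma wt_A1 (hd0 : 0 < d) (hdn : d < (n : ℝ) - 1) (hC₀ : 1 ≤ C₀)
    (hne : Γ.Nonempty) (hcl : IsClosed Γ) (hreg : AhlforsRegular n d C₀ Γ) :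
    ∃ A : ℝ≥0∞, A ≠ ⊤ ∧ A1 (wt n d Γ) A := by
  obtain ⟨S, hS, h⟩ := wt_ball hd0 hdn hC₀ hne hcl hreg
  have hnull := null_of_strip hd0 hdn hC₀ hne hcl hreg
  have hκ := kap_pos n
  set κ := volume.real (ball (0 : Euc n) 1) with hκd
  set a : ℝ := (n : ℝ) - d - 1 with ha
  have ha0 : 0 < a := by linarith
  have hexp : d + 1 - (n : ℝ) = -a := by rw [ha]; ring
  refine ⟨ENNReal.ofReal (2 ^ a + S * 3 ^ n / κ), ENNReal.ofReal_ne_top, ?_⟩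
  have hae : ∀ᵐ z : Euc n, z ∉ Γ := measure_eq_zero_iff_ae_notMem.1 hnull
  filter_upwards [hae] with z hz r hr
  have hδ : 0 < infDist z Γ := (hcl.notMem_iff_infDist_pos hne).1 hz
  set δ := infDist z Γ with hδd
  have hwz : wt n d Γ z = ENNReal.ofReal (δ ^ (-a)) := by
    unfold wt weightW; rw [hexp]
  rcases le_or_gt r (δ / 2) with hrs | hrs
  · have hb : ∀ x ∈ ball z r, wt n d Γ x ≤ ENNReal.ofReal (2 ^ a) * wt n d Γ z := by
      intro x hx
      have h1 : δ ≤ infDist x Γ + dist z x := infDist_le_infDist_add_dist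
      have h2 : δ / 2 ≤ infDist x Γ := by
        rw [mem_ball, dist_comm] at hx; linarith
      rw [hwz, ← ENNReal.ofReal_mul (by positivity)]
      unfold wt weightW
      apply ENNReal.ofReal_le_ofReal
      rw [hexp]
      calc infDist x Γ ^ (-a) ≤ (δ / 2) ^ (-a) :=
            Real.rpow_le_rpow_of_nonpos (by positivity) h2 (by linarith)
        _ = _ := by
            rw [Real.div_rpow hδ.le (by norm_num), Real.rpow_neg (by norm_num : (0:ℝ) ≤ 2)]
            field_simp
    calc ∫⁻ x in ball z r, wt n d Γ x ≤ ∫⁻ x in ball z r, ENNReal.ofReal (2 ^ a) * wt n d Γ z :=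
          setLIntegral_mono' measurableSet_ball hb
      _ = ENNReal.ofReal (2 ^ a) * volume (ball z r) * wt n d Γ z := by
          rw [setLIntegral_const]; ring
      _ ≤ _ := by
          gcongr
          have : 0 < S * 3 ^ n / κ := by positivity
          linarith
  · obtain ⟨γ, hγ, hzγ⟩ := hcl.exists_infDist_eq_dist hne z
    have hsub : ball z r ⊆ ball γ (3 * r) := by
      intro x hx
      have := dist_triangle x z γ
      simp only [mem_ball] at *
      linarith
    calc ∫⁻ x in ball z r, wt n d Γ x ≤ ∫⁻ x in ball γ (3 * r), wt n d Γ x :=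
          lintegral_mono_set hsub
      _ ≤ ENNReal.ofReal (S * (3 * r) ^ (d + 1)) := h γ hγ _ (by positivity)
      _ ≤ ENNReal.ofReal ((S * 3 ^ n / κ) * (r ^ n * κ) * δ ^ (-a)) := by
          apply ENNReal.ofReal_le_ofReal
          have e1 : (3 * r) ^ (d + 1) = (3 * r) ^ n * (3 * r) ^ (-a) := by
            rw [← Real.rpow_natCast, ← Real.rpow_add (by positivity)]
            congr 1; rw [ha]; ring
          have e2 : (3 * r) ^ (-a) ≤ δ ^ (-a) :=
            Real.rpow_le_rpow_of_nonpos hδ (by linarith) (by linarith)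
          rw [e1]
          calc S * ((3 * r) ^ n * (3 * r) ^ (-a)) ≤ S * ((3 * r) ^ n * δ ^ (-a)) := by gcongr
            _ = _ := by rw [mul_pow]; field_simp
      _ = ENNReal.ofReal (S * 3 ^ n / κ) * volume (ball z r) * wt n d Γ z := by
          rw [hwz, vol_ball_eq z hr, ENNReal.ofReal_mul (by positivity),
            ENNReal.ofReal_mul (by positivity)]
      _ ≤ _ := by
          gcongr
          have : (0 : ℝ) < 2 ^ a := by positivity
          linarith

lemma wt_locfin (hd0 : 0 < d) (hdn : d < (n : ℝ) - 1) (hC₀ : 1 ≤ C₀)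
    (hne : Γ.Nonempty) (hcl : IsClosed Γ) (hreg : AhlforsRegular n d C₀ Γ) :
    IsLocallyFiniteMeasure (volume.withDensity (wt n d Γ)) := by
  obtain ⟨S, hS, h⟩ := wt_ball hd0 hdn hC₀ hne hcl hreg
  obtain ⟨γ, hγ⟩ := hne
  refine ⟨fun x => ⟨ball γ (dist x γ + 1), isOpen_ball.mem_nhds (by simp), ?_⟩⟩
  rw [withDensity_apply _ measurableSet_ball]
  exact (h γ hγ _ (by positivity)).trans_lt ENNReal.ofReal_lt_top

end
end

section
/-- Scalar weak gradient with test functions supported in `E`. -/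
def WG {n : ℕ} (u : Euc n → ℝ) (v : Euc n → Euc n) (E : Set (Euc n)) : Prop :=
  ∀ φ : Euc n → ℝ, ContDiff ℝ (⊤ : ℕ∞) φ → HasCompactSupport φ → tsupport φ ⊆ E →
    ∀ e : Euc n, ∫ x, u x * fderiv ℝ φ x e = -∫ x, φ x * inner ℝ (v x) e

lemma li_mul {n : ℕ} {g : Euc n → ℝ} {u : Euc n → ℝ} (hg : Continuous g)
    (hgc : HasCompactSupport g) (hu : LocallyIntegrable u volume) :
    Integrable (fun x => g x * u x) volume :=
  hu.integrable_smul_left_of_hasCompactSupport hg hgc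

lemma fd_cont {n : ℕ} {φ : Euc n → ℝ} (h : ContDiff ℝ (⊤ : ℕ∞) φ) :
    Continuous (fun x => fderiv ℝ φ x) := h.continuous_fderiv (by simp)

lemma fd_diff {n : ℕ} {φ : Euc n → ℝ} (h : ContDiff ℝ (⊤ : ℕ∞) φ) :
    Differentiable ℝ φ := h.differentiable (by simp)

lemma fd_cs {n : ℕ} {φ : Euc n → ℝ} (h : HasCompactSupport φ) (e : Euc n) :
    HasCompactSupport (fun x => fderiv ℝ φ x e) :=
  h.fderiv_apply (𝕜 := ℝ) e

lemma inner_grad {n : ℕ} (φ : Euc n → ℝ) (x e : Euc n) :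
    inner ℝ e (gradient φ x) = fderiv ℝ φ x e := by
  rw [real_inner_comm]; simp [gradient]

lemma wg_of_distrib {n : ℕ} {E : Set (Euc n)} (hE : IsOpen E) {u : Euc n → ℝ} {v : Euc n → Euc n}
    (hu : LocallyIntegrable u volume) (hv : LocallyIntegrable (E.indicator v) volume)
    (h : IsDistribGradOn u v E) : WG u (E.indicator v) E := by
  intro φ hφ hc hs e
  have h1 := h φ hφ hc hs
  have hs' : ∀ x, x ∉ E → φ x = 0 := fun x hx => by
    by_contra h0
    exact hx (hs (subset_tsupport _ h0))
  have hs2 : ∀ x, x ∉ E → fderiv ℝ φ x = 0 := fun x hx =>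
    fderiv_of_notMem_tsupport (𝕜 := ℝ) (fun h0 => hx (hs h0))
  have e1 : ∫ x in E, u x • gradient φ x = ∫ x, u x • gradient φ x := by
    apply setIntegral_eq_integral_of_forall_compl_eq_zero
    intro x hx
    simp [gradient, hs2 x hx]
  have e2 : ∫ x in E, φ x • v x = ∫ x, φ x • E.indicator v x := by
    rw [← integral_indicator hE.measurableSet]
    congr 1; ext1 x
    by_cases hx : x ∈ E <;> simp [hx]
  rw [e1, e2] at h1
  have hgc : Continuous (fun x => gradient φ x) := by
    unfold gradient
    exact (InnerProductSpace.toDual ℝ (Euc n)).symm.continuous.comp (fd_cont hφ)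
  have hgs : HasCompactSupport (fun x => gradient φ x) := by
    have := hc.fderiv (𝕜 := ℝ)
    exact this.comp_left (g := (InnerProductSpace.toDual ℝ (Euc n)).symm) (by simp)
  have i1 : Integrable (fun x => u x • gradient φ x) volume :=
    hu.integrable_smul_right_of_hasCompactSupport hgc hgs
  have i2 : Integrable (fun x => φ x • E.indicator v x) volume :=
    hv.integrable_smul_left_of_hasCompactSupport hφ.continuous hc
  have h2 := congrArg (fun z => inner ℝ e z) h1
  simp only [inner_neg_right] at h2
  rw [← integral_inner i1, ← integral_inner i2] at h2
  simp only [inner_smul_right, inner_grad] at h2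
  rw [h2]
  simp only [real_inner_comm]

lemma moll_grad {n : ℕ} {E : Set (Euc n)} {u : Euc n → ℝ} {v : Euc n → Euc n}
    (hu : LocallyIntegrable u volume) (hv : LocallyIntegrable v volume) (h : WG u v E) (k : ℕ)
    {x : Euc n} (hx : closedBall x (bmp n k).rOut ⊆ E) (e : Euc n) :
    fderiv ℝ (moll k u) x e = inner ℝ (moll k v x) e := by
  have h1 := (ker_compact n k).hasFDerivAt_convolution_left (ContinuousLinearMap.lsmul ℝ ℝ)
    ((ker_smooth n k).of_le (by simp)) hu x
  have h2 : fderiv ℝ (moll k u) x = _ := h1.fderiv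
  rw [h2, convolution_eq_swap]
  have hφ : ContDiff ℝ (⊤ : ℕ∞) (fun y => mker n k (x - y)) :=
    (ker_smooth n k).comp (contDiff_const.sub contDiff_id)
  have hφc : HasCompactSupport (fun y => mker n k (x - y)) :=
    (ker_compact n k).comp_homeomorph (Homeomorph.subLeft x)
  have hφs : tsupport (fun y => mker n k (x - y)) ⊆ E := by
    refine (closure_minimal ?_ isClosed_closedBall).trans hx
    intro y hy
    by_contra h0
    apply hy
    apply ker_zero
    simp only [mem_closedBall, not_le, dist_eq_norm] at h0
    rw [norm_sub_rev]; exact h0.le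
  have h3 := h _ hφ hφc hφs e
  have hfd : ∀ y, fderiv ℝ (fun y => mker n k (x - y)) y e = - fderiv ℝ (mker n k) (x - y) e := by
    intro y
    have : HasFDerivAt (fun y => mker n k (x - y)) ((fderiv ℝ (mker n k) (x - y)).comp (-ContinuousLinearMap.id ℝ (Euc n))) y := by
      apply HasFDerivAt.comp y
      · exact (fd_diff (ker_smooth n k) _).hasFDerivAt
      · simpa using (hasFDerivAt_id y).const_sub x
    rw [this.fderiv]; simp
  rw [ContinuousLinearMap.integral_apply]
  · simp only [ContinuousLinearMap.precompL_apply, ContinuousLinearMap.lsmul_apply, smul_eq_mul]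
    simp only [hfd, mul_neg, integral_neg, neg_inj] at h3
    have : ∫ t, fderiv ℝ (mker n k) (x - t) e * u t = ∫ t, mker n k (x - t) * inner ℝ (v t) e := by
      rw [← h3]; simp only [mul_comm]
    rw [this, moll_apply, real_inner_comm, ← integral_inner (ker_mul_integrable k hv x)]
    simp only [inner_smul_right, real_inner_comm]
  · have hc1 : Continuous (fun t => fderiv ℝ (mker n k) (x - t)) :=
      (fd_cont (ker_smooth n k)).comp (by fun_prop)
    have hs1 : HasCompactSupport (fun t => fderiv ℝ (mker n k) (x - t)) :=
      ((ker_compact n k).fderiv (𝕜 := ℝ)).comp_homeomorph (Homeomorph.subLeft x)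
    have i1 := hu.integrable_smul_right_of_hasCompactSupport hc1 hs1
    refine i1.congr (Eventually.of_forall fun t => ?_)
    ext w
    simp [ContinuousLinearMap.precompL_apply, mul_comm]

lemma moll_l1loc {n : ℕ} {F : Type*} [NormedAddCommGroup F] [NormedSpace ℝ F] [CompleteSpace F]
    {g : Euc n → F} (hg : LocallyIntegrable g volume) (c : Euc n) (R : ℝ) :
    Tendsto (fun k => ∫⁻ x in ball c R, ‖moll k g x - g x‖ₑ) atTop (𝓝 0) := by
  set g' := (closedBall c (R + 1)).indicator g with hg'
  have hi : Integrable g' volume := by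
    rw [hg', integrable_indicator_iff measurableSet_closedBall]
    exact hg.integrableOn_isCompact (isCompact_closedBall _ _)
  have : IsLocallyFiniteMeasure ((volume : Measure (Euc n)).withDensity (fun _ => 1)) := by
    have : (volume : Measure (Euc n)).withDensity (fun _ => 1) = volume := withDensity_one
    rw [this]; infer_instance
  have hw : (volume : Measure (Euc n)).withDensity (fun _ => 1) = volume := withDensity_one
  have := moll_tendsto (n := n) (p := 1) le_rfl (by simp) (W := fun _ => 1) measurable_const
    (A := 1) (by simp) A1_one hi.locallyIntegrable (by rw [hw]; exact memLp_one_iff_integrable.2 hi)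
  rw [hw] at this
  refine tendsto_of_tendsto_of_tendsto_of_le_of_le tendsto_const_nhds this (fun _ => zero_le) ?_
  intro k
  dsimp only
  rw [eLpNorm_one_eq_lintegral_enorm]
  refine le_trans (le_of_eq ?_) (setLIntegral_le_lintegral (ball c R) _)
  refine setLIntegral_congr_fun measurableSet_ball fun x hx => ?_
  have hgx : g' x = g x := by
    rw [hg', indicator_of_mem]
    simp only [mem_ball, mem_closedBall] at *; linarith
  have hm : moll k g' x = moll k g x := by
    rw [moll_apply, moll_apply]
    congr 1; ext1 y
    by_cases hy : (bmp n k).rOut ≤ ‖x - y‖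
    · simp [ker_zero hy]
    · rw [hg', indicator_of_mem]
      have h1 := bmp_rOut_le n k
      have h2 := dist_triangle y x c
      rw [dist_comm y x, dist_eq_norm x y] at h2
      simp only [mem_ball, mem_closedBall] at *; linarith
  simp [hgx, hm]
end

section
lemma cs_bdd {n : ℕ} {φ : Euc n → ℝ} (hφ : Continuous φ) (hc : HasCompactSupport φ) :
    ∃ B : ℝ, 0 < B ∧ ∀ x, |φ x| ≤ B := by
  obtain ⟨B, hB⟩ := hφ.bounded_above_of_compact_support hc
  exact ⟨|B| + 1, by positivity, fun x => (hB x).trans (by linarith [le_abs_self B])⟩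

lemma cs_ball {n : ℕ} {φ : Euc n → ℝ} (hc : HasCompactSupport φ) (c : Euc n) :
    ∃ R : ℝ, 0 < R ∧ tsupport φ ⊆ ball c R := by
  obtain ⟨R, hR⟩ := hc.isCompact.isBounded.subset_ball c
  exact ⟨max R 1, by positivity, hR.trans (ball_subset_ball (le_max_left _ _))⟩

lemma wg_chain {n : ℕ} {E : Set (Euc n)} (hE : IsOpen E) {u : Euc n → ℝ} {v : Euc n → Euc n}
    (hu : LocallyIntegrable u volume) (hv : LocallyIntegrable v volume) (h : WG u v E)
    {F : ℝ → ℝ} (hF : ContDiff ℝ 1 F) {B : ℝ} (hB : ∀ t, |F t| ≤ B) (hF' : ∀ t, |deriv F t| ≤ 1)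
    {φ : Euc n → ℝ} (hφ : ContDiff ℝ (⊤ : ℕ∞) φ) (hc : HasCompactSupport φ)
    (hs : tsupport φ ⊆ E) (e : Euc n) :
    ∫ x, F (u x) * fderiv ℝ φ x e = -∫ x, φ x * (deriv F (u x) * inner ℝ (v x) e) := by
  have hdc : Continuous (deriv F) := hF.continuous_deriv (by simp)
  obtain ⟨r, hr, hrE⟩ := hc.isCompact.exists_cthickening_subset_open hE hs
  obtain ⟨P, hP, hPφ⟩ := cs_bdd hφ.continuous hc
  obtain ⟨R, hR, hRs⟩ := cs_ball hc 0
  have hsm : ∀ k, ContDiff ℝ (⊤ : ℕ∞) (moll k u) := fun k => moll_contDiff k hu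
  have hvm : ∀ k, ContDiff ℝ (⊤ : ℕ∞) (moll k v) := fun k => moll_contDiff k hv
  have h1 : ∀ᶠ k in atTop, ∫ x, F (moll k u x) * fderiv ℝ φ x e =
      -∫ x, φ x * (deriv F (moll k u x) * inner ℝ (moll k v x) e) := by
    filter_upwards [(bmp_tendsto n).eventually (gt_mem_nhds hr)] with k hk
    have hgd : ∀ x, HasFDerivAt (fun x => F (moll k u x))
        (deriv F (moll k u x) • fderiv ℝ (moll k u) x) x := fun x => by
      have := ((hF.differentiable (by simp) (moll k u x)).hasDerivAt).comp_hasFDerivAt x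
        (fd_diff (hsm k) x).hasFDerivAt
      exact this
    have c1 : Continuous (fun x => F (moll k u x)) := hF.continuous.comp (hsm k).continuous
    have c2 : Continuous (fun x => fderiv ℝ φ x e) := (fd_cont hφ).clm_apply continuous_const
    have c3 : Continuous (fun x => deriv F (moll k u x) * fderiv ℝ (moll k u) x e) :=
      (hdc.comp (hsm k).continuous).mul ((fd_cont (hsm k)).clm_apply continuous_const)
    have hfe : ∀ x, fderiv ℝ (fun x => F (moll k u x)) x e =
        deriv F (moll k u x) * fderiv ℝ (moll k u) x e := fun x => by
      rw [(hgd x).fderiv]; simp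
    rw [integral_mul_fderiv_eq_neg_fderiv_mul_of_integrable]
    · congr 1
      apply integral_congr_ae
      refine Eventually.of_forall fun x => ?_
      simp only [hfe]
      by_cases hx : x ∈ tsupport φ
      · rw [moll_grad hu hv h k (x := x) ?_ e]
        · ring
        · refine Subset.trans ?_ hrE
          refine (closedBall_subset_closedBall hk.le).trans (closedBall_subset_cthickening hx r)
      · simp [image_eq_zero_of_notMem_tsupport hx]
    · simp only [hfe]
      exact (c3.mul hφ.continuous).integrable_of_hasCompactSupport hc.mul_left
    · exact (c1.mul c2).integrable_of_hasCompactSupport (fd_cs hc e).mul_left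
    · exact (c1.mul hφ.continuous).integrable_of_hasCompactSupport hc.mul_left
    · exact fun x _ => (hgd x).differentiableAt
    · exact fun x _ => fd_diff hφ x
  have hae := moll_ae hu
  have l1 : Tendsto (fun k => ∫ x, F (moll k u x) * fderiv ℝ φ x e) atTop
      (𝓝 (∫ x, F (u x) * fderiv ℝ φ x e)) := by
    have c2 : Continuous (fun x => fderiv ℝ φ x e) := (fd_cont hφ).clm_apply continuous_const
    refine tendsto_integral_of_dominated_convergence (fun x => B * |fderiv ℝ φ x e|) ?_ ?_ ?_ ?_
    · exact fun k => ((hF.continuous.comp (hsm k).continuous).mul c2).aestronglyMeasurable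
    · exact ((c2.integrable_of_hasCompactSupport (fd_cs hc e)).abs).const_mul B
    · intro k
      refine Eventually.of_forall fun x => ?_
      rw [Real.norm_eq_abs, abs_mul]
      exact mul_le_mul_of_nonneg_right (hB _) (abs_nonneg _)
    · filter_upwards [hae] with x hx
      exact ((hF.continuous.tendsto _).comp hx).mul tendsto_const_nhds
  have l2 : Tendsto (fun k => ∫ x, φ x * (deriv F (moll k u x) * inner ℝ (v x) e)) atTop
      (𝓝 (∫ x, φ x * (deriv F (u x) * inner ℝ (v x) e))) := by
    have iv : Integrable (fun x => φ x • v x) volume :=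
      hv.integrable_smul_left_of_hasCompactSupport hφ.continuous hc
    have ivn : Integrable (fun x => ‖φ x • v x‖ * ‖e‖) volume := iv.norm.mul_const _
    refine tendsto_integral_of_dominated_convergence (fun x => ‖φ x • v x‖ * ‖e‖) ?_ ivn ?_ ?_
    · intro k
      exact hφ.continuous.aestronglyMeasurable.mul
        (((hdc.comp (hsm k).continuous).aestronglyMeasurable).mul
          (hv.aestronglyMeasurable.inner aestronglyMeasurable_const))
    · intro k
      refine Eventually.of_forall fun x => ?_
      rw [norm_mul, norm_mul, norm_smul, mul_assoc]
      refine mul_le_mul_of_nonneg_left ?_ (norm_nonneg _)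
      calc ‖deriv F (moll k u x)‖ * ‖inner ℝ (v x) e‖ ≤ 1 * (‖v x‖ * ‖e‖) :=
            mul_le_mul (hF' _) (norm_inner_le_norm _ _) (norm_nonneg _) zero_le_one
        _ = _ := one_mul _
    · filter_upwards [hae] with x hx
      exact tendsto_const_nhds.mul (((hdc.tendsto _).comp hx).mul tendsto_const_nhds)
  have l3 : Tendsto (fun k => ∫ x, φ x * (deriv F (moll k u x) * inner ℝ (moll k v x - v x) e))
      atTop (𝓝 0) := by
    have hL := moll_l1loc hv 0 R
    have hL' : Tendsto (fun k => ENNReal.ofReal (P * ‖e‖) *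
        ∫⁻ x in ball 0 R, ‖moll k v x - v x‖ₑ) atTop (𝓝 0) := by
      have := ENNReal.Tendsto.const_mul (a := ENNReal.ofReal (P * ‖e‖)) hL (Or.inr ENNReal.ofReal_ne_top)
      simpa using this
    rw [tendsto_iff_norm_sub_tendsto_zero]
    simp only [sub_zero]
    have := (ENNReal.tendsto_toReal ENNReal.zero_ne_top).comp hL'
    have hev : ∀ᶠ k in atTop, ENNReal.ofReal (P * ‖e‖) *
        ∫⁻ x in ball 0 R, ‖moll k v x - v x‖ₑ < ⊤ := hL'.eventually (gt_mem_nhds (by simp))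
    refine squeeze_zero' (Eventually.of_forall fun _ => norm_nonneg _) ?_ (by simpa using this)
    filter_upwards [hev] with k hk
    have hb : ENNReal.ofReal ‖∫ x, φ x * (deriv F (moll k u x) * inner ℝ (moll k v x - v x) e)‖ ≤
        ENNReal.ofReal (P * ‖e‖) * ∫⁻ x in ball 0 R, ‖moll k v x - v x‖ₑ := by
      rw [ofReal_norm]
      refine (enorm_integral_le_lintegral_enorm _).trans ?_
      rw [← lintegral_const_mul' _ _ ENNReal.ofReal_ne_top, ← lintegral_indicator measurableSet_ball]
      refine lintegral_mono fun x => ?_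
      by_cases hx : x ∈ tsupport φ
      · rw [indicator_of_mem (hRs hx), ← ofReal_norm, ← ofReal_norm,
          ← ENNReal.ofReal_mul (by positivity)]
        apply ENNReal.ofReal_le_ofReal
        rw [norm_mul, norm_mul]
        calc ‖φ x‖ * (‖deriv F (moll k u x)‖ * ‖inner ℝ (moll k v x - v x) e‖)
            ≤ P * (1 * (‖moll k v x - v x‖ * ‖e‖)) := by
              gcongr
              · exact hPφ x
              · exact hF' _
              · exact norm_inner_le_norm _ _
          _ = _ := by ring
      · simp [image_eq_zero_of_notMem_tsupport hx]
    have := ENNReal.toReal_mono hk.ne hb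
    rwa [ENNReal.toReal_ofReal (norm_nonneg _)] at this
  have l4 : Tendsto (fun k => ∫ x, φ x * (deriv F (moll k u x) * inner ℝ (moll k v x) e)) atTop
      (𝓝 (∫ x, φ x * (deriv F (u x) * inner ℝ (v x) e))) := by
    have := l2.add l3
    rw [add_zero] at this
    refine this.congr fun k => ?_
    have hψc : Continuous (fun x => φ x * deriv F (moll k u x)) :=
      hφ.continuous.mul (hdc.comp (hsm k).continuous)
    have hψs : HasCompactSupport (fun x => φ x * deriv F (moll k u x)) := hc.mul_right
    have ii : ∀ w : Euc n → Euc n, LocallyIntegrable w volume →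
        Integrable (fun x => φ x * (deriv F (moll k u x) * inner ℝ (w x) e)) volume := by
      intro w hw
      have := (hw.integrable_smul_left_of_hasCompactSupport hψc hψs).inner_const (𝕜 := ℝ) e
      refine this.congr (Eventually.of_forall fun x => ?_)
      simp only [inner_smul_left]
      simp [mul_assoc]
    rw [← integral_add (ii _ hv) (ii (fun x => moll k v x - v x) ((hvm k).continuous.locallyIntegrable.sub hv))]
    congr 1; ext1 x
    rw [inner_sub_left]; ring
  exact tendsto_nhds_unique_of_eventuallyEq l1 l4.neg h1
end

section
lemma st_deriv_bdd : ∃ B : ℝ, 0 < B ∧ ∀ t, |deriv Real.smoothTransition t| ≤ B := by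
  have hc : Continuous (deriv Real.smoothTransition) :=
    (Real.smoothTransition.contDiff (n := 1)).continuous_deriv (by simp)
  obtain ⟨B, hB⟩ := (isCompact_Icc (a := (0:ℝ)) (b := 1)).exists_bound_of_continuousOn hc.continuousOn
  refine ⟨|B| + 1, by positivity, fun t => ?_⟩
  by_cases ht : t ∈ Icc (0:ℝ) 1
  · exact (hB t ht).trans (by linarith [le_abs_self B])
  · have : deriv Real.smoothTransition t = 0 := by
      rw [mem_Icc, not_and_or, not_le, not_le] at ht
      rcases ht with ht | ht
      · have : Real.smoothTransition =ᶠ[𝓝 t] fun _ => 0 := by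
          filter_upwards [gt_mem_nhds ht] with s hs
          exact Real.smoothTransition.zero_of_nonpos hs.le
        rw [this.deriv_eq]; simp
      · have : Real.smoothTransition =ᶠ[𝓝 t] fun _ => 1 := by
          filter_upwards [lt_mem_nhds ht] with s hs
          exact Real.smoothTransition.one_of_one_le hs.le
        rw [this.deriv_eq]; simp
    rw [this]; simp; positivity

lemma moll_lip {n : ℕ} {f : Euc n → ℝ} (hf : LipschitzWith 1 f) (k : ℕ) :
    LipschitzWith 1 (moll k f) := by
  have hli : LocallyIntegrable f volume := hf.continuous.locallyIntegrable
  have hap : ∀ x, moll k f x = ∫ t, mker n k t * f (x - t) := fun x => rfl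
  have hint : ∀ x, Integrable (fun t => mker n k t * f (x - t)) volume := fun x =>
    ((ker_cont n k).mul (hf.continuous.comp (by fun_prop))).integrable_of_hasCompactSupport
      (ker_compact n k).mul_right
  apply LipschitzWith.of_dist_le_mul
  intro x y
  rw [dist_eq_norm, hap, hap, ← integral_sub (hint x) (hint y)]
  calc ‖∫ t, (mker n k t * f (x - t) - mker n k t * f (y - t))‖
      ≤ ∫ t, mker n k t * dist x y := by
        refine norm_integral_le_of_norm_le ?_ ?_
        · exact (((ker_cont n k).integrable_of_hasCompactSupport (ker_compact n k))).mul_const _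
        · refine Eventually.of_forall fun t => ?_
          rw [← mul_sub, norm_mul, Real.norm_of_nonneg (ker_nonneg n k t)]
          refine mul_le_mul_of_nonneg_left ?_ (ker_nonneg n k t)
          have := hf.dist_le_mul (x - t) (y - t)
          simpa [dist_eq_norm] using this
    _ = _ := by rw [integral_mul_const, ker_integral]; simp

/-- Cutoffs vanishing near `Γ`. -/
def cutG (n : ℕ) (Γ : Set (Euc n)) (k : ℕ) (x : Euc n) : ℝ :=
  Real.smoothTransition (moll k (fun y => infDist y Γ) x * ((k : ℝ) + 1) - 2)

lemma infd_li {n : ℕ} (Γ : Set (Euc n)) : LocallyIntegrable (fun y => infDist y Γ) volume :=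
  (continuous_infDist_pt Γ).locallyIntegrable

lemma cutG_smooth {n : ℕ} (Γ : Set (Euc n)) (k : ℕ) : ContDiff ℝ (⊤ : ℕ∞) (cutG n Γ k) :=
  Real.smoothTransition.contDiff.comp
    (((moll_contDiff k (infd_li Γ)).mul contDiff_const).sub contDiff_const)

lemma moll_infd {n : ℕ} (Γ : Set (Euc n)) (k : ℕ) (x : Euc n) :
    |moll k (fun y => infDist y Γ) x - infDist x Γ| ≤ 1 / ((k : ℝ) + 1) := by
  have := ContDiffBump.dist_normed_convolution_le (φ := bmp n k) (μ := (volume : Measure (Euc n)))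
    (g := fun y => infDist y Γ) (x₀ := x) (ε := 1 / ((k : ℝ) + 1))
    (continuous_infDist_pt Γ).aestronglyMeasurable (by
      intro y hy
      have h1 := (lipschitz_infDist_pt Γ).dist_le_mul y x
      rw [mem_ball, bmp_rOut] at hy
      simp only [NNReal.coe_one, one_mul] at h1
      linarith)
  exact this

lemma cutG_nonneg {n : ℕ} (Γ : Set (Euc n)) (k : ℕ) (x : Euc n) : 0 ≤ cutG n Γ k x :=
  Real.smoothTransition.nonneg _

lemma cutG_le {n : ℕ} (Γ : Set (Euc n)) (k : ℕ) (x : Euc n) : cutG n Γ k x ≤ 1 :=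
  Real.smoothTransition.le_one _

lemma cutG_zero {n : ℕ} {Γ : Set (Euc n)} {k : ℕ} {x : Euc n}
    (h : infDist x Γ ≤ 1 / ((k : ℝ) + 1)) : cutG n Γ k x = 0 := by
  apply Real.smoothTransition.zero_of_nonpos
  have h1 := (abs_le.1 (moll_infd Γ k x)).2
  have hk : (0 : ℝ) < (k : ℝ) + 1 := by positivity
  have h2 : moll k (fun y => infDist y Γ) x ≤ 2 / ((k : ℝ) + 1) := by
    have : 2 / ((k : ℝ) + 1) = 1 / ((k : ℝ) + 1) + 1 / ((k : ℝ) + 1) := by ring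
    linarith
  rw [le_div_iff₀ hk] at h2
  linarith

lemma cutG_one {n : ℕ} {Γ : Set (Euc n)} {k : ℕ} {x : Euc n}
    (h : 4 / ((k : ℝ) + 1) ≤ infDist x Γ) : cutG n Γ k x = 1 := by
  apply Real.smoothTransition.one_of_one_le
  have h1 := (abs_le.1 (moll_infd Γ k x)).1
  have hk : (0 : ℝ) < (k : ℝ) + 1 := by positivity
  have h2 : 3 / ((k : ℝ) + 1) ≤ moll k (fun y => infDist y Γ) x := by
    have : 4 / ((k : ℝ) + 1) = 3 / ((k : ℝ) + 1) + 1 / ((k : ℝ) + 1) := by ring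
    linarith
  rw [div_le_iff₀ hk] at h2
  linarith

lemma cutG_grad {n : ℕ} (Γ : Set (Euc n)) : ∃ B : ℝ, 0 < B ∧ ∀ k x,
    ‖fderiv ℝ (cutG n Γ k) x‖ ≤ B * ((k : ℝ) + 1) := by
  obtain ⟨B, hB, hB'⟩ := st_deriv_bdd
  refine ⟨B, hB, fun k x => ?_⟩
  have hlip : LipschitzWith 1 (moll k (fun y => infDist y Γ)) := moll_lip (lipschitz_infDist_pt Γ) k
  have h1 : HasFDerivAt (fun x => moll k (fun y => infDist y Γ) x * ((k : ℝ) + 1) - 2)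
      (((k : ℝ) + 1) • fderiv ℝ (moll k (fun y => infDist y Γ)) x) x :=
    (((fd_diff (moll_contDiff k (infd_li Γ)) x).hasFDerivAt).mul_const _).sub_const _
  have h2 := ((Real.smoothTransition.contDiff (n := 1)).differentiable (by simp)
    (moll k (fun y => infDist y Γ) x * ((k : ℝ) + 1) - 2)).hasDerivAt.comp_hasFDerivAt x h1
  have h3 : fderiv ℝ (cutG n Γ k) x = _ := h2.fderiv
  rw [h3, norm_smul, norm_smul]
  have h4 := norm_fderiv_le_of_lipschitz ℝ hlip (x₀ := x)
  rw [Real.norm_of_nonneg (by positivity : (0:ℝ) ≤ (k:ℝ)+1)]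
  calc _ ≤ B * (((k : ℝ) + 1) * 1) := by
        gcongr
        · exact hB' _
        · simpa using h4
    _ = _ := by ring

lemma cutG_fd_zero {n : ℕ} {Γ : Set (Euc n)} {k : ℕ} {x : Euc n}
    (h : 4 / ((k : ℝ) + 1) < infDist x Γ) : fderiv ℝ (cutG n Γ k) x = 0 := by
  have : cutG n Γ k =ᶠ[𝓝 x] fun _ => 1 := by
    filter_upwards [(continuous_infDist_pt Γ).tendsto x (lt_mem_nhds h)] with y hy
    exact cutG_one (le_of_lt hy)
  rw [this.fderiv_eq]; simp

lemma cutG_tendsto {n : ℕ} {Γ : Set (Euc n)} (hcl : IsClosed Γ) (hne : Γ.Nonempty) {x : Euc n}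
    (hx : x ∉ Γ) : ∀ᶠ k in atTop, cutG n Γ k x = 1 := by
  have h0 : 0 < infDist x Γ := (hcl.notMem_iff_infDist_pos hne).1 hx
  have h1 : Tendsto (fun k : ℕ => 4 * (1 / ((k : ℝ) + 1))) atTop (𝓝 (4 * 0)) :=
    tendsto_one_div_add_atTop_nhds_zero_nat.const_mul 4
  rw [mul_zero] at h1
  filter_upwards [h1.eventually (gt_mem_nhds h0)] with k hk
  apply cutG_one
  rw [mul_one_div] at hk; exact hk.le

lemma cutG_supp {n : ℕ} {Γ : Set (Euc n)} (hcl : IsClosed Γ) (hne : Γ.Nonempty) (k : ℕ) :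
    tsupport (cutG n Γ k) ⊆ Γᶜ := by
  have : tsupport (cutG n Γ k) ⊆ {x | 1 / ((k : ℝ) + 1) ≤ infDist x Γ} := by
    refine closure_minimal ?_ (isClosed_le continuous_const (continuous_infDist_pt Γ))
    intro x hx
    by_contra h0
    exact hx (cutG_zero (not_le.1 h0).le)
  intro x hx hxΓ
  have h1 : 1 / ((k : ℝ) + 1) ≤ infDist x Γ := this hx
  rw [infDist_zero_of_mem hxΓ] at h1
  have : 0 < 1 / ((k : ℝ) + 1) := by positivity
  linarith
end

section
lemma remove_bdd {n : ℕ} {d C₀ : ℝ} {Γ : Set (Euc n)} (hd0 : 0 < d) (hdn : d < (n:ℝ) - 1)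
    (hC₀ : 1 ≤ C₀) (hne : Γ.Nonempty) (hcl : IsClosed Γ) (hreg : AhlforsRegular n d C₀ Γ)
    {u : Euc n → ℝ} {v : Euc n → Euc n}
    (hu : LocallyIntegrable u volume) (hv : LocallyIntegrable v volume) (h : WG u v Γᶜ)
    {F : ℝ → ℝ} (hF : ContDiff ℝ 1 F) {B : ℝ} (hB : ∀ t, |F t| ≤ B) (hF' : ∀ t, |deriv F t| ≤ 1)
    {φ : Euc n → ℝ} (hφ : ContDiff ℝ (⊤ : ℕ∞) φ) (hc : HasCompactSupport φ) (e : Euc n) :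
    ∫ x, F (u x) * fderiv ℝ φ x e = -∫ x, φ x * (deriv F (u x) * inner ℝ (v x) e) := by
  have hdc : Continuous (deriv F) := hF.continuous_deriv (by simp)
  have hB0 : 0 ≤ B := (abs_nonneg _).trans (hB 0)
  obtain ⟨γ, hγ⟩ := hne
  have hne : Γ.Nonempty := ⟨γ, hγ⟩
  obtain ⟨P, hP, hPφ⟩ := cs_bdd hφ.continuous hc
  obtain ⟨R, hR, hRs⟩ := cs_ball hc γ
  obtain ⟨G, hG, hGχ⟩ := cutG_grad Γ
  obtain ⟨S, hS, hSt⟩ := strip_vol hd0 hC₀ hne hcl hreg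
  have hnull := null_of_strip hd0 hdn hC₀ hne hcl hreg
  have haeΓ : ∀ᵐ x, x ∉ Γ := measure_eq_zero_iff_ae_notMem.1 hnull
  have mF : AEStronglyMeasurable (fun x => F (u x)) volume :=
    hF.continuous.comp_aestronglyMeasurable hu.aestronglyMeasurable
  have mF' : AEStronglyMeasurable (fun x => deriv F (u x)) volume :=
    hdc.comp_aestronglyMeasurable hu.aestronglyMeasurable
  have c2 : Continuous (fun x => fderiv ℝ φ x e) := (fd_cont hφ).clm_apply continuous_const
  have cχ : ∀ k, Continuous (cutG n Γ k) := fun k => (cutG_smooth Γ k).continuous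
  have cχ' : ∀ k, Continuous (fun x => fderiv ℝ (cutG n Γ k) x e) := fun k =>
    (fd_cont (cutG_smooth Γ k)).clm_apply continuous_const
  have i1 : ∀ k, Integrable (fun x => F (u x) * (cutG n Γ k x * fderiv ℝ φ x e)) volume := by
    intro k
    refine Integrable.bdd_mul (c := B) ?_ mF (Eventually.of_forall fun x => hB _)
    exact ((cχ k).mul c2).integrable_of_hasCompactSupport (fd_cs hc e).mul_left
  have i2 : ∀ k, Integrable (fun x => F (u x) * (φ x * fderiv ℝ (cutG n Γ k) x e)) volume := by
    intro k
    refine Integrable.bdd_mul (c := B) ?_ mF (Eventually.of_forall fun x => hB _)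
    exact (hφ.continuous.mul (cχ' k)).integrable_of_hasCompactSupport hc.mul_right
  have h1 : ∀ k, (∫ x, F (u x) * (cutG n Γ k x * fderiv ℝ φ x e)) +
      ∫ x, F (u x) * (φ x * fderiv ℝ (cutG n Γ k) x e) =
      -∫ x, φ x * cutG n Γ k x * (deriv F (u x) * inner ℝ (v x) e) := by
    intro k
    have := wg_chain hcl.isOpen_compl hu hv h hF hB hF' (φ := fun x => φ x * cutG n Γ k x)
      (hφ.mul (cutG_smooth Γ k)) hc.mul_right
      ((closure_mono (Function.support_mul_subset_right _ _)).trans (cutG_supp hcl hne k)) e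
    rw [← this, ← integral_add (i1 k) (i2 k)]
    congr 1; ext1 x
    have hd : fderiv ℝ (fun x => φ x * cutG n Γ k x) x =
        φ x • fderiv ℝ (cutG n Γ k) x + cutG n Γ k x • fderiv ℝ φ x :=
      fderiv_fun_mul (fd_diff hφ x) (fd_diff (cutG_smooth Γ k) x)
    rw [hd]; simp; ring
  have l1 : Tendsto (fun k => ∫ x, F (u x) * (cutG n Γ k x * fderiv ℝ φ x e)) atTop
      (𝓝 (∫ x, F (u x) * fderiv ℝ φ x e)) := by
    refine tendsto_integral_of_dominated_convergence (fun x => B * |fderiv ℝ φ x e|) ?_ ?_ ?_ ?_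
    · exact fun k => (i1 k).aestronglyMeasurable
    · exact ((c2.integrable_of_hasCompactSupport (fd_cs hc e)).abs).const_mul B
    · intro k
      refine Eventually.of_forall fun x => ?_
      rw [Real.norm_eq_abs, abs_mul, abs_mul, abs_of_nonneg (cutG_nonneg Γ k x)]
      calc _ ≤ B * (1 * |fderiv ℝ φ x e|) := by
            gcongr
            · exact mul_nonneg (cutG_nonneg Γ k x) (abs_nonneg _)
            · exact hB _
            · exact cutG_le Γ k x
        _ = _ := by rw [one_mul]
    · filter_upwards [haeΓ] with x hx
      refine tendsto_const_nhds.congr' ?_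
      filter_upwards [cutG_tendsto hcl hne hx] with k hk
      rw [hk, one_mul]
  have l3 : Tendsto (fun k => ∫ x, φ x * cutG n Γ k x * (deriv F (u x) * inner ℝ (v x) e)) atTop
      (𝓝 (∫ x, φ x * (deriv F (u x) * inner ℝ (v x) e))) := by
    have iv : Integrable (fun x => φ x • v x) volume :=
      hv.integrable_smul_left_of_hasCompactSupport hφ.continuous hc
    have ivn : Integrable (fun x => ‖φ x • v x‖ * ‖e‖) volume := iv.norm.mul_const _
    refine tendsto_integral_of_dominated_convergence (fun x => ‖φ x • v x‖ * ‖e‖) ?_ ivn ?_ ?_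
    · intro k
      exact (hφ.continuous.mul (cχ k)).aestronglyMeasurable.mul
        (mF'.mul (hv.aestronglyMeasurable.inner aestronglyMeasurable_const))
    · intro k
      refine Eventually.of_forall fun x => ?_
      rw [norm_mul, norm_mul, norm_mul, norm_smul, mul_assoc, mul_assoc]
      refine mul_le_mul_of_nonneg_left ?_ (norm_nonneg _)
      rw [Real.norm_of_nonneg (cutG_nonneg Γ k x)]
      calc cutG n Γ k x * (‖deriv F (u x)‖ * ‖inner ℝ (v x) e‖) ≤ 1 * (1 * (‖v x‖ * ‖e‖)) := by
            gcongr
            · exact cutG_le Γ k x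
            · exact hF' _
            · exact norm_inner_le_norm _ _
        _ = _ := by ring
    · filter_upwards [haeΓ] with x hx
      refine tendsto_const_nhds.congr' ?_
      filter_upwards [cutG_tendsto hcl hne hx] with k hk
      rw [hk, mul_one]
  have l2 : Tendsto (fun k => ∫ x, F (u x) * (φ x * fderiv ℝ (cutG n Γ k) x e)) atTop (𝓝 0) := by
    set c := B * P * G * ‖e‖ with hcdef
    have hc0 : 0 ≤ c := by positivity
    set q : ℕ → ℝ := fun k => 1 / ((k:ℝ) + 1) with hq
    have hq0 : Tendsto q atTop (𝓝 0) := tendsto_one_div_add_atTop_nhds_zero_nat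
    have hqpos : ∀ k, 0 < q k := fun k => by simp only [hq]; positivity
    have ha : 0 < (n:ℝ) - d - 1 := by linarith
    have hlim : Tendsto (fun k => c * S * R ^ d * 5 * (5 * q k) ^ ((n:ℝ) - d - 1)) atTop (𝓝 0) := by
      have h5 : Tendsto (fun k => 5 * q k) atTop (𝓝 0) := by simpa using hq0.const_mul 5
      have := (h5.rpow_const (p := (n:ℝ) - d - 1) (Or.inr ha.le)).const_mul (c * S * R ^ d * 5)
      rwa [Real.zero_rpow ha.ne', mul_zero] at this
    have hev : ∀ᶠ k in atTop, 5 * q k ≤ R := by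
      have h5 : Tendsto (fun k => 5 * q k) atTop (𝓝 0) := by simpa using hq0.const_mul 5
      filter_upwards [h5.eventually (gt_mem_nhds hR)] with k hk using hk.le
    refine squeeze_zero_norm' ?_ hlim
    filter_upwards [hev] with k hk
    have hqk := hqpos k
    set T := ball γ R ∩ {x | infDist x Γ < 5 * q k} with hT
    have hTm : MeasurableSet T := measurableSet_ball.inter
      (isOpen_lt (continuous_infDist_pt Γ) continuous_const).measurableSet
    have hb : ENNReal.ofReal ‖∫ x, F (u x) * (φ x * fderiv ℝ (cutG n Γ k) x e)‖ ≤
        ENNReal.ofReal (c * S * R ^ d * 5 * (5 * q k) ^ ((n:ℝ) - d - 1)) := by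
      rw [ofReal_norm]
      refine (enorm_integral_le_lintegral_enorm _).trans ?_
      calc _ ≤ ∫⁻ x in T, ENNReal.ofReal (c * ((k:ℝ) + 1)) := by
            rw [← lintegral_indicator hTm]
            refine lintegral_mono fun x => ?_
            by_cases hx : x ∈ tsupport φ
            · by_cases hx2 : infDist x Γ < 5 * q k
              · rw [indicator_of_mem (show x ∈ T from ⟨hRs hx, hx2⟩), ← ofReal_norm]
                apply ENNReal.ofReal_le_ofReal
                rw [norm_mul, norm_mul]
                calc _ ≤ B * (P * (G * ((k:ℝ) + 1) * ‖e‖)) := by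
                      gcongr
                      · exact hB _
                      · exact hPφ _
                      · exact (ContinuousLinearMap.le_opNorm _ _).trans
                          (mul_le_mul_of_nonneg_right (hGχ k x) (norm_nonneg _))
                  _ = _ := by rw [hcdef]; ring
              · rw [cutG_fd_zero]
                · simp
                · have : 4 / ((k:ℝ) + 1) = 4 * q k := by simp only [hq]; ring
                  rw [this]; linarith
            · simp [image_eq_zero_of_notMem_tsupport hx]
        _ = ENNReal.ofReal (c * ((k:ℝ) + 1)) * volume T := by simp
        _ ≤ ENNReal.ofReal (c * ((k:ℝ) + 1)) * ENNReal.ofReal (S * R ^ d * (5 * q k) ^ ((n:ℝ) - d)) := by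
            gcongr
            exact hSt γ hγ R (5 * q k) (by positivity) hk
        _ = _ := by
            rw [← ENNReal.ofReal_mul (by positivity)]
            congr 1
            have e1 : (5 * q k) ^ ((n:ℝ) - d) = (5 * q k) ^ ((n:ℝ) - d - 1) * (5 * q k) := by
              rw [← Real.rpow_add_one (by positivity)]; congr 1; ring
            have e2 : ((k:ℝ) + 1) * q k = 1 := by simp only [hq]; field_simp
            rw [e1]
            calc _ = c * S * R ^ d * 5 * (5 * q k) ^ ((n:ℝ) - d - 1) * (((k:ℝ) + 1) * q k) := by ring
              _ = _ := by rw [e2, mul_one]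
    exact (ENNReal.ofReal_le_ofReal_iff (by positivity)).1 hb
  have l4 := l1.add l2
  rw [add_zero] at l4
  exact tendsto_nhds_unique (l4.congr h1) l3.neg

lemma wg_remove {n : ℕ} {d C₀ : ℝ} {Γ : Set (Euc n)} (hd0 : 0 < d) (hdn : d < (n:ℝ) - 1)
    (hC₀ : 1 ≤ C₀) (hne : Γ.Nonempty) (hcl : IsClosed Γ) (hreg : AhlforsRegular n d C₀ Γ)
    {u : Euc n → ℝ} {v : Euc n → Euc n}
    (hu : LocallyIntegrable u volume) (hv : LocallyIntegrable v volume) (h : WG u v Γᶜ) :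
    WG u v univ := by
  intro φ hφ hc _ e
  set F : ℕ → ℝ → ℝ := fun m t => ((m:ℝ) + 1) * Real.arctan (t / ((m:ℝ) + 1)) with hFd
  have hm : ∀ m : ℕ, (0:ℝ) < (m:ℝ) + 1 := fun m => by positivity
  have hF : ∀ m, ContDiff ℝ 1 (F m) := fun m =>
    contDiff_const.mul (Real.contDiff_arctan.comp (contDiff_id.div_const _))
  have hder : ∀ m t, HasDerivAt (F m) (1 / (1 + (t / ((m:ℝ) + 1)) ^ 2)) t := by
    intro m t
    have h1 := (((hasDerivAt_id t).div_const ((m:ℝ) + 1)).arctan).const_mul ((m:ℝ) + 1)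
    refine h1.congr_deriv ?_
    have := (hm m).ne'
    simp only [id]
    field_simp
  have hder' : ∀ m t, deriv (F m) t = 1 / (1 + (t / ((m:ℝ) + 1)) ^ 2) := fun m t => (hder m t).deriv
  have hF' : ∀ m t, |deriv (F m) t| ≤ 1 := by
    intro m t
    rw [hder', abs_of_nonneg (by positivity), div_le_one (by positivity)]
    nlinarith [sq_nonneg (t / ((m:ℝ) + 1))]
  have hB : ∀ m t, |F m t| ≤ ((m:ℝ) + 1) * (Real.pi / 2) := by
    intro m t
    simp only [hFd]
    rw [abs_mul, abs_of_pos (hm m)]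
    exact mul_le_mul_of_nonneg_left
      (abs_le.2 ⟨(Real.neg_pi_div_two_lt_arctan _).le, (Real.arctan_lt_pi_div_two _).le⟩) (hm m).le
  have hF0 : ∀ m, F m 0 = 0 := fun m => by simp [hFd]
  have hFt : ∀ m t, |F m t| ≤ |t| := by
    intro m t
    have hl : LipschitzWith 1 (F m) := lipschitzWith_of_nnnorm_deriv_le
      ((hF m).differentiable (by simp)) (fun x => by
        rw [← NNReal.coe_le_coe]; simpa using hF' m x)
    have := hl.dist_le_mul t 0
    simpa [hF0, Real.dist_eq] using this
  have hz : ∀ t : ℝ, Tendsto (fun m : ℕ => t / ((m:ℝ) + 1)) atTop (𝓝 0) := by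
    intro t
    have := tendsto_one_div_add_atTop_nhds_zero_nat.const_mul t
    simpa [div_eq_mul_inv] using this
  have hd_lim : ∀ t, Tendsto (fun m => deriv (F m) t) atTop (𝓝 1) := by
    intro t
    simp only [hder']
    have := (((hz t).pow 2).const_add 1)
    have h2 := this.inv₀ (by simp)
    simpa using h2
  have hF_lim : ∀ t, Tendsto (fun m => F m t) atTop (𝓝 t) := by
    intro t
    by_cases ht : t = 0
    · subst ht; simp [hF0]
    have h1 := (Real.hasDerivAt_arctan 0).tendsto_slope_zero
    have h2 : Tendsto (fun m : ℕ => t / ((m:ℝ) + 1)) atTop (𝓝[≠] 0) := by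
      refine tendsto_nhdsWithin_iff.2 ⟨hz t, Eventually.of_forall fun m => ?_⟩
      exact div_ne_zero ht (hm m).ne'
    have h3 := (h1.comp h2).const_mul t
    simp only [zero_add, Real.arctan_zero, sub_zero] at h3
    norm_num at h3
    refine h3.congr fun m => ?_
    have := (hm m).ne'
    simp only [hFd, Function.comp, smul_eq_mul]
    field_simp
  have key := fun m => remove_bdd hd0 hdn hC₀ hne hcl hreg hu hv h (hF m) (hB m) (hF' m) hφ hc e
  have c2 : Continuous (fun x => fderiv ℝ φ x e) := (fd_cont hφ).clm_apply continuous_const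
  have l1 : Tendsto (fun m => ∫ x, F m (u x) * fderiv ℝ φ x e) atTop
      (𝓝 (∫ x, u x * fderiv ℝ φ x e)) := by
    refine tendsto_integral_of_dominated_convergence (fun x => ‖fderiv ℝ φ x e * u x‖) ?_ ?_ ?_ ?_
    · exact fun m => ((hF m).continuous.comp_aestronglyMeasurable hu.aestronglyMeasurable).mul
        c2.aestronglyMeasurable
    · exact (li_mul c2 (fd_cs hc e) hu).norm
    · intro m
      refine Eventually.of_forall fun x => ?_
      have h0 := mul_le_mul_of_nonneg_left (hFt m (u x)) (norm_nonneg (fderiv ℝ φ x e))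
      calc ‖F m (u x) * fderiv ℝ φ x e‖ = ‖fderiv ℝ φ x e‖ * |F m (u x)| := by
            rw [mul_comm, norm_mul (fderiv ℝ φ x e) (F m (u x)), Real.norm_eq_abs (F m (u x))]
        _ ≤ _ := h0
        _ = _ := by rw [norm_mul, Real.norm_eq_abs (u x)]
    · exact Eventually.of_forall fun x => (hF_lim _).mul tendsto_const_nhds
  have l2 : Tendsto (fun m => ∫ x, φ x * (deriv (F m) (u x) * inner ℝ (v x) e)) atTop
      (𝓝 (∫ x, φ x * inner ℝ (v x) e)) := by
    have iv : Integrable (fun x => φ x • v x) volume :=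
      hv.integrable_smul_left_of_hasCompactSupport hφ.continuous hc
    have ivn : Integrable (fun x => ‖φ x • v x‖ * ‖e‖) volume := iv.norm.mul_const _
    refine tendsto_integral_of_dominated_convergence (fun x => ‖φ x • v x‖ * ‖e‖) ?_ ivn ?_ ?_
    · intro m
      exact hφ.continuous.aestronglyMeasurable.mul
        ((((hF m).continuous_deriv (by simp)).comp_aestronglyMeasurable hu.aestronglyMeasurable).mul
          (hv.aestronglyMeasurable.inner aestronglyMeasurable_const))
    · intro m
      refine Eventually.of_forall fun x => ?_
      rw [norm_mul, norm_mul, norm_smul, mul_assoc]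
      refine mul_le_mul_of_nonneg_left ?_ (norm_nonneg _)
      calc ‖deriv (F m) (u x)‖ * ‖inner ℝ (v x) e‖ ≤ 1 * (‖v x‖ * ‖e‖) :=
            mul_le_mul (hF' m _) (norm_inner_le_norm _ _) (norm_nonneg _) zero_le_one
        _ = _ := one_mul _
    · refine Eventually.of_forall fun x => ?_
      have := (((hd_lim (u x)).mul_const (inner ℝ (v x) e)).const_mul (φ x))
      simpa using this
  exact tendsto_nhds_unique (l1.congr key) l2.neg
end

section
lemma avg_enorm {n : ℕ} {f : Euc n → ℝ} {c : Euc n} {R : ℝ} (hR : 0 < R)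
    (hf : IntegrableOn f (ball c R) volume) (a : ℝ) :
    ‖(⨍ y in ball c R, f y) - a‖ₑ ^ 2 ≤
      (volume (ball c R))⁻¹ * ∫⁻ y in ball c R, ‖f y - a‖ₑ ^ 2 := by
  set B := ball c R with hB
  have h0 : volume B ≠ 0 := (measure_ball_pos _ _ hR).ne'
  have ht : volume B ≠ ⊤ := measure_ball_lt_top.ne
  set μ : Measure (Euc n) := (volume.restrict B univ)⁻¹ • volume.restrict B with hμ
  have hu : volume.restrict B univ = volume B := by simp
  have : IsProbabilityMeasure μ := ⟨by
    rw [hμ, Measure.smul_apply, hu, smul_eq_mul, ENNReal.inv_mul_cancel h0 ht]⟩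
  have hfi : Integrable f μ := Integrable.smul_measure hf (by rw [hu]; simp [h0])
  have e1 : (⨍ y in B, f y) - a = ∫ y, (f y - a) ∂μ := by
    rw [integral_sub hfi (integrable_const a)]
    simp [average, hμ]
    rw [Measure.real, inv_mul_cancel₀ (ENNReal.toReal_ne_zero.2 ⟨h0, ht⟩), one_mul]
  rw [e1]
  calc ‖∫ y, (f y - a) ∂μ‖ₑ ^ 2 ≤ (∫⁻ y, ‖f y - a‖ₑ ∂μ) ^ 2 := by
        gcongr; exact enorm_integral_le_lintegral_enorm _
    _ ≤ ∫⁻ y, ‖f y - a‖ₑ ^ 2 ∂μ :=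
        jensen_sq μ (hfi.sub (integrable_const a)).aestronglyMeasurable.enorm
    _ = _ := by rw [hμ, lintegral_smul_measure, hu, smul_eq_mul]

lemma wt_lower {n : ℕ} {d : ℝ} {Γ : Set (Euc n)} (hdn : d < (n:ℝ) - 1)
    (hne : Γ.Nonempty) (hcl : IsClosed Γ) {x₀ : Euc n} (hx₀ : x₀ ∈ Γ) {R : ℝ} (hR : 0 < R)
    {z : Euc n} (hz : z ∈ ball x₀ R) (hzΓ : z ∉ Γ) :
    1 ≤ ENNReal.ofReal (R ^ ((n:ℝ) - 1 - d)) * wt n d Γ z := by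
  have h0 : 0 < infDist z Γ := (hcl.notMem_iff_infDist_pos hne).1 hzΓ
  have h1 : infDist z Γ ≤ R := (infDist_le_dist_of_mem hx₀).trans (mem_ball.1 hz).le
  unfold wt weightW
  rw [← ENNReal.ofReal_mul (by positivity), ENNReal.one_le_ofReal]
  have h2 : R ^ (d + 1 - (n:ℝ)) ≤ infDist z Γ ^ (d + 1 - (n:ℝ)) :=
    Real.rpow_le_rpow_of_nonpos h0 h1 (by linarith)
  calc (1:ℝ) = R ^ ((n:ℝ) - 1 - d) * R ^ (d + 1 - (n:ℝ)) := by
        rw [← Real.rpow_add hR]; ring_nf; simp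
    _ ≤ _ := by gcongr

lemma unweight {n : ℕ} {d : ℝ} {Γ : Set (Euc n)} (hdn : d < (n:ℝ) - 1)
    (hne : Γ.Nonempty) (hcl : IsClosed Γ) (hnull : volume Γ = 0) {x₀ : Euc n} (hx₀ : x₀ ∈ Γ) {R : ℝ}
    (hR : 0 < R) (g : Euc n → ℝ≥0∞) :
    ∫⁻ z in ball x₀ R, g z ≤ ENNReal.ofReal (R ^ ((n:ℝ) - 1 - d)) * ∫⁻ z, g z * wt n d Γ z := by
  have haeΓ : ∀ᵐ x, x ∉ Γ := measure_eq_zero_iff_ae_notMem.1 hnull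
  rw [← lintegral_const_mul' _ _ ENNReal.ofReal_ne_top]
  refine le_trans ?_ (setLIntegral_le_lintegral (ball x₀ R) _)
  refine lintegral_mono_ae ?_
  filter_upwards [ae_restrict_mem measurableSet_ball, ae_restrict_of_ae haeΓ] with z hz hzΓ
  calc g z = g z * 1 := (mul_one _).symm
    _ ≤ g z * (ENNReal.ofReal (R ^ ((n:ℝ) - 1 - d)) * wt n d Γ z) := by
        gcongr; exact wt_lower hdn hne hcl hx₀ hR hz hzΓ
    _ = _ := by ring

lemma cont_intOn {n : ℕ} {f : Euc n → ℝ} (hf : Continuous f) (c : Euc n) (R : ℝ) :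
    IntegrableOn f (ball c R) volume :=
  (hf.continuousOn.integrableOn_compact (isCompact_closedBall c R)).mono_set ball_subset_closedBall

/-- The constant in the telescoping estimate. -/
def KK (n : ℕ) : ℝ := 16 * 4 ^ n / volume.real (ball (0 : Euc n) 1)

lemma KK_pos (n : ℕ) : 0 < KK n := by
  have := kap_pos n
  unfold KK; positivity

lemma ofReal5 {a b c e : ℝ} (ha : 0 ≤ a) (hb : 0 ≤ b) (hc : 0 ≤ c) (he : 0 ≤ e) (f : ℝ)
    (E : ℝ≥0∞) : ENNReal.ofReal a * (ENNReal.ofReal b * (ENNReal.ofReal c * ENNReal.ofReal e *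
      (ENNReal.ofReal f * E))) = ENNReal.ofReal (a * (b * (c * e * f))) * E := by
  rw [ENNReal.ofReal_mul ha, ENNReal.ofReal_mul hb, ENNReal.ofReal_mul (mul_nonneg hc he),
    ENNReal.ofReal_mul hc]
  ring

lemma avg_step {n : ℕ} {d : ℝ} {Γ : Set (Euc n)} (hd0 : 0 < d) (hdn : d < (n:ℝ) - 1)
    (hne : Γ.Nonempty) (hcl : IsClosed Γ) (hnull : volume Γ = 0) {x₀ : Euc n} (hx₀ : x₀ ∈ Γ) {R : ℝ}
    (hR : 0 < R) {f : Euc n → ℝ} (hf : ContDiff ℝ 1 f) :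
    ‖(⨍ y in ball x₀ R, f y) - (⨍ y in ball x₀ (2 * R), f y)‖ₑ ^ 2 ≤
      ENNReal.ofReal (KK n * R ^ (1 - d)) * ∫⁻ z, ‖fderiv ℝ f z‖ₑ ^ 2 * wt n d Γ z := by
  have hR2 : 0 < 2 * R := by positivity
  set a := ⨍ y in ball x₀ (2 * R), f y with ha
  set κ := volume.real (ball (0 : Euc n) 1) with hκ
  have hκ0 : 0 < κ := kap_pos n
  set E := ∫⁻ z, ‖fderiv ℝ f z‖ₑ ^ 2 * wt n d Γ z with hE
  have hinv : ∀ r : ℝ, 0 < r → (volume (ball x₀ r))⁻¹ = ENNReal.ofReal ((r ^ n * κ)⁻¹) := by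
    intro r hr
    rw [vol_ball_eq x₀ hr, ENNReal.ofReal_inv_of_pos (by positivity)]
  have hp := poincare (n := n) (W := fun _ => 1) measurable_const (A := 1) A1_one hf x₀ hR2
  simp only [mul_one, one_mul] at hp
  calc ‖(⨍ y in ball x₀ R, f y) - a‖ₑ ^ 2
      ≤ (volume (ball x₀ R))⁻¹ * ∫⁻ x in ball x₀ R, ‖f x - a‖ₑ ^ 2 :=
        avg_enorm hR (cont_intOn hf.continuous _ _) a
    _ ≤ (volume (ball x₀ R))⁻¹ * ∫⁻ x in ball x₀ (2 * R), ‖f x - a‖ₑ ^ 2 := by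
        gcongr; linarith
    _ ≤ (volume (ball x₀ R))⁻¹ * ∫⁻ x in ball x₀ (2 * R), (volume (ball x₀ (2 * R)))⁻¹ *
          ∫⁻ y in ball x₀ (2 * R), ‖f x - f y‖ₑ ^ 2 := by
        gcongr with x
        have := avg_enorm hR2 (cont_intOn hf.continuous x₀ (2 * R)) (f x)
        rw [← ha] at this
        simp_rw [enorm_sub_rev (f x)]
        exact this
    _ = (volume (ball x₀ R))⁻¹ * ((volume (ball x₀ (2 * R)))⁻¹ * ∫⁻ x in ball x₀ (2 * R),
          ∫⁻ y in ball x₀ (2 * R), ‖f x - f y‖ₑ ^ 2) := by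
        rw [lintegral_const_mul']
        simp [(measure_ball_pos volume x₀ hR2).ne']
    _ ≤ (volume (ball x₀ R))⁻¹ * ((volume (ball x₀ (2 * R)))⁻¹ *
          (ENNReal.ofReal (2 * (2 * R)) ^ 2 * volume (ball (0 : Euc n) (2 * (2 * R))) *
            (ENNReal.ofReal ((2 * R) ^ ((n:ℝ) - 1 - d)) * E))) := by
        gcongr
        refine hp.trans ?_
        gcongr
        exact unweight hdn hne hcl hnull hx₀ hR2 _
    _ = ENNReal.ofReal ((R ^ n * κ)⁻¹ * (((2 * R) ^ n * κ)⁻¹ * ((2 * (2 * R)) ^ 2 *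
          ((2 * (2 * R)) ^ n * κ) * (2 * R) ^ ((n:ℝ) - 1 - d)))) * E := by
        rw [hinv R hR, hinv _ hR2, vol_ball_eq 0 (by positivity), ← ENNReal.ofReal_pow (by positivity)]
        exact ofReal5 (by positivity) (by positivity) (by positivity) (by positivity) _ _
    _ ≤ _ := by
        gcongr ENNReal.ofReal ?_ * _
        have e1 : (2 * R) ^ ((n:ℝ) - 1 - d) = (2 * R) ^ n * (2 * R) ^ (1 - d) * ((2 * R) ^ 2)⁻¹ := by
          rw [← Real.rpow_natCast (2 * R) n, ← Real.rpow_natCast (2 * R) 2, ← Real.rpow_neg hR2.le,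
            ← Real.rpow_add hR2, ← Real.rpow_add hR2]
          congr 1; push_cast; ring
        have e2 : (2 * R) ^ (1 - d) = 2 ^ (1 - d) * R ^ (1 - d) :=
          Real.mul_rpow (by norm_num) hR.le
        have e3 : (2:ℝ) ^ (1 - d) ≤ 2 ^ (1:ℝ) :=
          Real.rpow_le_rpow_of_exponent_le (by norm_num) (by linarith)
        rw [Real.rpow_one] at e3
        have e4 : (2 * (2 * R)) ^ n = 4 ^ n * R ^ n := by rw [← mul_pow]; ring
        rw [e1, e2, e4]
        unfold KK
        rw [← hκ]
        have : (R ^ n * κ)⁻¹ * (((2 * R) ^ n * κ)⁻¹ * ((2 * (2 * R)) ^ 2 * (4 ^ n * R ^ n * κ) *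
            ((2 * R) ^ n * (2 ^ (1 - d) * R ^ (1 - d)) * ((2 * R) ^ 2)⁻¹))) =
            4 * 2 ^ (1 - d) * (4 ^ n / κ * R ^ (1 - d)) := by
          field_simp
          norm_num
        rw [this]
        calc _ ≤ 4 * 2 * (4 ^ n / κ * R ^ (1 - d)) := by gcongr
          _ ≤ 16 * (4 ^ n / κ * R ^ (1 - d)) := by gcongr; norm_num
          _ = _ := by ring

lemma osc_wt {n : ℕ} {W : Euc n → ℝ≥0∞} (hW : Measurable W) {A : ℝ≥0∞} (hA : A1 W A)
    {f : Euc n → ℝ} (hf : ContDiff ℝ 1 f) (c : Euc n) {R : ℝ} (hR : 0 < R) :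
    ∫⁻ x in ball c R, ‖f x - ⨍ y in ball c R, f y‖ₑ ^ 2 * W x ≤
      ENNReal.ofReal (2 * R) ^ 2 * (A * 2 ^ n) * ∫⁻ z, ‖fderiv ℝ f z‖ₑ ^ 2 * W z := by
  set a := ⨍ y in ball c R, f y with ha
  have h0 : volume (ball c R) ≠ 0 := (measure_ball_pos _ _ hR).ne'
  have ht : volume (ball c R) ≠ ⊤ := measure_ball_lt_top.ne
  have hv2 : volume (ball (0 : Euc n) (2 * R)) = 2 ^ n * volume (ball c R) := by
    rw [vol_ball_eq 0 (by positivity), vol_ball_eq c hR, mul_pow, mul_assoc,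
      ENNReal.ofReal_mul (by positivity), ENNReal.ofReal_pow (by norm_num)]
    simp
  calc ∫⁻ x in ball c R, ‖f x - a‖ₑ ^ 2 * W x
      ≤ ∫⁻ x in ball c R, (volume (ball c R))⁻¹ * ∫⁻ y in ball c R, ‖f x - f y‖ₑ ^ 2 * W x := by
        refine lintegral_mono fun x => ?_
        rw [lintegral_mul_const _ (by
          exact ((continuous_const.sub hf.continuous).enorm.measurable.pow_const _)), ← mul_assoc]
        gcongr
        have := avg_enorm hR (cont_intOn hf.continuous c R) (f x)
        rw [← ha] at this
        simp_rw [enorm_sub_rev (f x)]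
        exact this
    _ = (volume (ball c R))⁻¹ * ∫⁻ x in ball c R, ∫⁻ y in ball c R, ‖f x - f y‖ₑ ^ 2 * W x := by
        rw [lintegral_const_mul']
        simp [h0]
    _ ≤ (volume (ball c R))⁻¹ * (ENNReal.ofReal (2 * R) ^ 2 * (A * (2 ^ n * volume (ball c R))) *
        ∫⁻ z, ‖fderiv ℝ f z‖ₑ ^ 2 * W z) := by
        rw [← hv2]
        gcongr
        refine (poincare hW hA hf c hR).trans ?_
        gcongr
        exact Measure.restrict_le_self
    _ = ((volume (ball c R))⁻¹ * volume (ball c R)) * (ENNReal.ofReal (2 * R) ^ 2 * (A * 2 ^ n) *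
        ∫⁻ z, ‖fderiv ℝ f z‖ₑ ^ 2 * W z) := by ring
    _ = _ := by rw [ENNReal.inv_mul_cancel h0 ht, one_mul]
end

section
/-- Weighted energy of a field. -/
def Enr {F : Type*} [NormedAddCommGroup F] (n : ℕ) (d : ℝ) (Γ : Set (Euc n)) (g : Euc n → F) : ℝ≥0∞ :=
  ∫⁻ z, ‖g z‖ₑ ^ 2 * wt n d Γ z

lemma Enr_eLp {F : Type*} [NormedAddCommGroup F] [NormedSpace ℝ F] {n : ℕ} {d : ℝ} {Γ : Set (Euc n)} {g : Euc n → F}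
    (hg : AEStronglyMeasurable g volume) :
    eLpNorm g 2 (volume.withDensity (wt n d Γ)) = Enr n d Γ g ^ (1 / 2 : ℝ) := by
  rw [eLpNorm_withDensity (by norm_num) (by norm_num) wt_meas hg]
  simp [Enr]

lemma Enr_eLp' {F : Type*} [NormedAddCommGroup F] [NormedSpace ℝ F] {n : ℕ} {d : ℝ} {Γ : Set (Euc n)} {g : Euc n → F}
    (hg : AEStronglyMeasurable g volume) :
    Enr n d Γ g = eLpNorm g 2 (volume.withDensity (wt n d Γ)) ^ 2 := by
  rw [Enr_eLp hg, ← ENNReal.rpow_natCast, ← ENNReal.rpow_mul]; simp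

lemma Enr_grad {n : ℕ} {d : ℝ} {Γ : Set (Euc n)} (hcl : IsClosed Γ) (hnull : volume Γ = 0)
    (g : Euc n → Euc n) :
    ∫⁻ z in Γᶜ, ENNReal.ofReal (‖g z‖ ^ 2) ∂(measW n d Γ) = Enr n d Γ g := by
  rw [measW_eq, setLIntegral_withDensity_eq_setLIntegral_mul_non_measurable _ wt_meas _
    hcl.measurableSet.compl (Eventually.of_forall fun x => by simp [wt])]
  have : (volume : Measure (Euc n)).restrict Γᶜ = volume := by
    rw [Measure.restrict_eq_self_of_ae_mem]
    exact measure_eq_zero_iff_ae_notMem.1 hnull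
  rw [this]
  unfold Enr
  congr 1; ext1 z
  rw [Pi.mul_apply, mul_comm, ENNReal.ofReal_pow (norm_nonneg _), ofReal_norm]

lemma setup {n : ℕ} {d C₀ : ℝ} {Γ : Set (Euc n)} (hd0 : 0 < d) (hdn : d < (n:ℝ) - 1)
    (hC₀ : 1 ≤ C₀) (hne : Γ.Nonempty) (hcl : IsClosed Γ) (hreg : AhlforsRegular n d C₀ Γ)
    {u : Euc n → ℝ} {v : Euc n → Euc n} (hm : MemW n d Γ u v) (hu : LocallyIntegrable u volume) :
    ∃ v' : Euc n → Euc n, (∀ x, x ∉ Γ → v' x = v x) ∧ LocallyIntegrable v' volume ∧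
      Enr n d Γ v' = ∫⁻ z in Γᶜ, ENNReal.ofReal (‖v z‖ ^ 2) ∂(measW n d Γ) ∧
      Enr n d Γ v' < ⊤ ∧ WG u v' univ := by
  have hnull := null_of_strip hd0 hdn hC₀ hne hcl hreg
  set v' := Γᶜ.indicator v with hv'
  have hE : Enr n d Γ v' = ∫⁻ z in Γᶜ, ENNReal.ofReal (‖v z‖ ^ 2) ∂(measW n d Γ) := by
    rw [← Enr_grad hcl hnull]
    refine setLIntegral_congr_fun hcl.measurableSet.compl fun x hx => ?_
    simp only [hv', indicator_of_mem hx]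
  have hEt : Enr n d Γ v' < ⊤ := hE ▸ hm.l2
  have hms : AEStronglyMeasurable v' volume := by
    rw [hv', aestronglyMeasurable_indicator_iff hcl.measurableSet.compl]
    exact hm.gradLocInt.aestronglyMeasurable
  obtain ⟨x₀, hx₀⟩ := hne
  have hne : Γ.Nonempty := ⟨x₀, hx₀⟩
  have hli : LocallyIntegrable v' volume := by
    rw [locallyIntegrable_iff]
    intro K hK
    obtain ⟨R, hR⟩ := hK.isBounded.subset_ball x₀
    have hR1 : 0 < max R 1 := by positivity
    refine IntegrableOn.mono_set (t := ball x₀ (max R 1)) ?_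
      (hR.trans (ball_subset_ball (le_max_left _ _)))
    refine ⟨hms.restrict, ?_⟩
    rw [hasFiniteIntegral_iff_enorm]
    calc ∫⁻ z in ball x₀ (max R 1), ‖v' z‖ₑ ≤ ∫⁻ z in ball x₀ (max R 1), (1 + ‖v' z‖ₑ ^ 2) := by
          refine lintegral_mono fun z => ?_
          rcases le_total ‖v' z‖ₑ 1 with h | h
          · exact h.trans le_self_add
          · refine le_trans ?_ le_add_self
            calc ‖v' z‖ₑ = ‖v' z‖ₑ * 1 := (mul_one _).symm
              _ ≤ ‖v' z‖ₑ * ‖v' z‖ₑ := by gcongr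
              _ = _ := (sq _).symm
      _ = volume (ball x₀ (max R 1)) + ∫⁻ z in ball x₀ (max R 1), ‖v' z‖ₑ ^ 2 := by
          rw [lintegral_add_left measurable_const]; simp
      _ < ⊤ := by
          refine ENNReal.add_lt_top.2 ⟨measure_ball_lt_top, ?_⟩
          refine (unweight hdn hne hcl hnull hx₀ hR1 _).trans_lt ?_
          exact ENNReal.mul_lt_top ENNReal.ofReal_lt_top hEt
  refine ⟨v', fun x hx => indicator_of_mem (s := Γᶜ) hx v, hli, hE, hEt, ?_⟩
  exact wg_remove hd0 hdn hC₀ hne hcl hreg hu hli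
    (wg_of_distrib hcl.isOpen_compl hu hli hm.isGrad)

lemma moll_gradient {n : ℕ} {u : Euc n → ℝ} {v : Euc n → Euc n}
    (hu : LocallyIntegrable u volume) (hv : LocallyIntegrable v volume) (h : WG u v univ) (k : ℕ) :
    gradient (moll k u) = moll k v := by
  ext1 x
  refine ext_inner_left ℝ fun e => ?_
  rw [inner_grad, moll_grad hu hv h k (subset_univ _), real_inner_comm]

lemma enorm_grad {n : ℕ} (f : Euc n → ℝ) (x : Euc n) : ‖gradient f x‖ₑ = ‖fderiv ℝ f x‖ₑ := by
  rw [← ofReal_norm, ← ofReal_norm]; simp [gradient]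

lemma Enr_fderiv {n : ℕ} {d : ℝ} {Γ : Set (Euc n)} (f : Euc n → ℝ) :
    Enr n d Γ (gradient f) = ∫⁻ z, ‖fderiv ℝ f z‖ₑ ^ 2 * wt n d Γ z := by
  unfold Enr; simp only [enorm_grad]

lemma avg_moll {n : ℕ} {u : Euc n → ℝ} (hu : LocallyIntegrable u volume) (c : Euc n) (R : ℝ) :
    Tendsto (fun k => ⨍ y in ball c R, moll k u y) atTop (𝓝 (⨍ y in ball c R, u y)) := by
  simp_rw [setAverage_eq]
  refine Tendsto.const_smul ?_ _
  have hb : ∀ g : Euc n → ℝ, LocallyIntegrable g volume → IntegrableOn g (ball c R) volume :=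
    fun g hg => (hg.integrableOn_isCompact (isCompact_closedBall c R)).mono_set ball_subset_closedBall
  exact tendsto_integral_of_L1 u (hb u hu).aestronglyMeasurable
    (Eventually.of_forall fun k => hb _ (moll_contDiff k hu).continuous.locallyIntegrable)
    (moll_l1loc hu c R)

lemma Enr_moll_tendsto {n : ℕ} {d C₀ : ℝ} {Γ : Set (Euc n)} (hd0 : 0 < d) (hdn : d < (n:ℝ) - 1)
    (hC₀ : 1 ≤ C₀) (hne : Γ.Nonempty) (hcl : IsClosed Γ) (hreg : AhlforsRegular n d C₀ Γ)
    {v : Euc n → Euc n} (hv : LocallyIntegrable v volume) (hE : Enr n d Γ v < ⊤) :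
    Tendsto (fun k => eLpNorm (moll k v - v) 2 (volume.withDensity (wt n d Γ))) atTop (𝓝 0) := by
  obtain ⟨A, hAt, hA⟩ := wt_A1 hd0 hdn hC₀ hne hcl hreg
  have := wt_locfin hd0 hdn hC₀ hne hcl hreg
  refine moll_tendsto (by norm_num) (by norm_num) wt_meas hAt hA hv ⟨?_, ?_⟩
  · exact hv.aestronglyMeasurable.mono_ac (withDensity_absolutelyContinuous _ _)
  · rw [Enr_eLp hv.aestronglyMeasurable]
    exact ENNReal.rpow_lt_top_of_nonneg (by norm_num) hE.ne

lemma avg_step2 {n : ℕ} {d : ℝ} {Γ : Set (Euc n)} (hd0 : 0 < d) (hdn : d < (n:ℝ) - 1)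
    (hne : Γ.Nonempty) (hcl : IsClosed Γ) (hnull : volume Γ = 0) {x₀ : Euc n} (hx₀ : x₀ ∈ Γ) (j : ℕ)
    {f : Euc n → ℝ} (hf : ContDiff ℝ 1 f) :
    ‖(⨍ y in ball x₀ ((2:ℝ) ^ j), f y) - (⨍ y in ball x₀ ((2:ℝ) ^ (j + 1)), f y)‖ₑ ≤
      ENNReal.ofReal (√(KK n) * ((2:ℝ) ^ ((1 - d) / 2)) ^ j) * Enr n d Γ (gradient f) ^ (1 / 2 : ℝ) := by
  have h := avg_step hd0 hdn hne hcl hnull hx₀ (R := (2:ℝ) ^ j) (by positivity) hf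
  rw [← Enr_fderiv, show 2 * (2:ℝ) ^ j = 2 ^ (j + 1) by ring] at h
  have h2 := ENNReal.rpow_le_rpow h (z := 1 / 2) (by norm_num)
  rw [← ENNReal.rpow_natCast, ← ENNReal.rpow_mul] at h2
  norm_num at h2
  rw [ENNReal.mul_rpow_of_nonneg _ _ (by norm_num)] at h2
  convert h2 using 2
  · rw [ENNReal.ofReal_rpow_of_nonneg (by have := KK_pos n; positivity) (by norm_num)]
    congr 1
    rw [Real.mul_rpow (KK_pos n).le (by positivity), Real.sqrt_eq_rpow]
    congr 1
    rw [← Real.rpow_natCast, ← Real.rpow_natCast, ← Real.rpow_mul (by norm_num),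
      ← Real.rpow_mul (by norm_num), ← Real.rpow_mul (by norm_num)]
    congr 1; ring

lemma avg_step3 {n : ℕ} {d C₀ : ℝ} {Γ : Set (Euc n)} (hd0 : 0 < d) (hdn : d < (n:ℝ) - 1)
    (hC₀ : 1 ≤ C₀) (hne : Γ.Nonempty) (hcl : IsClosed Γ) (hreg : AhlforsRegular n d C₀ Γ)
    {x₀ : Euc n} (hx₀ : x₀ ∈ Γ) (j : ℕ) {u : Euc n → ℝ} {v : Euc n → Euc n}
    (hu : LocallyIntegrable u volume) (hv : LocallyIntegrable v volume) (hE : Enr n d Γ v < ⊤)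
    (h : WG u v univ) :
    ‖(⨍ y in ball x₀ ((2:ℝ) ^ j), u y) - (⨍ y in ball x₀ ((2:ℝ) ^ (j + 1)), u y)‖ₑ ≤
      ENNReal.ofReal (√(KK n) * ((2:ℝ) ^ ((1 - d) / 2)) ^ j) * Enr n d Γ v ^ (1 / 2 : ℝ) := by
  have hnull := null_of_strip hd0 hdn hC₀ hne hcl hreg
  have l1 := ((avg_moll hu x₀ ((2:ℝ) ^ j)).sub (avg_moll hu x₀ ((2:ℝ) ^ (j + 1)))).enorm
  have l2 := Enr_moll_tendsto hd0 hdn hC₀ hne hcl hreg hv hE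
  have l3 := ENNReal.Tendsto.const_mul
    (a := ENNReal.ofReal (√(KK n) * ((2:ℝ) ^ ((1 - d) / 2)) ^ j))
    (l2.const_add (eLpNorm v 2 (volume.withDensity (wt n d Γ)))) (Or.inr ENNReal.ofReal_ne_top)
  rw [add_zero, Enr_eLp hv.aestronglyMeasurable] at l3
  refine le_of_tendsto_of_tendsto' l1 l3 fun k => ?_
  have hs := moll_contDiff k hu
  refine (avg_step2 hd0 hdn hne hcl hnull hx₀ j (hs.of_le (by simp))).trans ?_
  have hac : volume.withDensity (wt n d Γ) ≪ volume := withDensity_absolutelyContinuous _ _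
  have hvk : AEStronglyMeasurable (moll k v) volume :=
    (moll_contDiff k hv).continuous.aestronglyMeasurable
  gcongr
  rw [moll_gradient hu hv h k, ← Enr_eLp hvk, ← Enr_eLp hv.aestronglyMeasurable]
  have : moll k v = v + (moll k v - v) := by simp
  nth_rewrite 1 [this]
  exact eLpNorm_add_le (hv.aestronglyMeasurable.mono_ac hac)
    ((hvk.sub hv.aestronglyMeasurable).mono_ac hac) (by norm_num)

lemma tele {a : ℕ → ℝ} {D r : ℝ} {E : ℝ≥0∞} (hE : E < ⊤) (hr : r < 1) (hr0 : 0 ≤ r) (hD : 0 ≤ D)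
    (h : ∀ j, ‖a j - a (j + 1)‖ₑ ≤ ENNReal.ofReal (D * r ^ j) * E ^ (1 / 2 : ℝ)) :
    ∃ l, Tendsto a atTop (𝓝 l) ∧ ∀ j, |a j - l| ≤ D / (1 - r) * r ^ j * E.toReal ^ (1 / 2 : ℝ) := by
  have h1 : ∀ j, dist (a j) (a (j + 1)) ≤ (D * E.toReal ^ (1 / 2 : ℝ)) * r ^ j := by
    intro j
    have hE2 : E ^ (1 / 2 : ℝ) ≠ ⊤ := (ENNReal.rpow_lt_top_of_nonneg (by norm_num) hE.ne).ne
    have := ENNReal.toReal_mono (ENNReal.mul_ne_top ENNReal.ofReal_ne_top hE2) (h j)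
    rw [ENNReal.toReal_mul, ENNReal.toReal_ofReal (by positivity), ← ENNReal.toReal_rpow,
      toReal_enorm] at this
    rw [dist_eq_norm]; linarith
  obtain ⟨l, hl⟩ := cauchySeq_tendsto_of_complete (cauchySeq_of_le_geometric r _ hr h1)
  refine ⟨l, hl, fun j => ?_⟩
  have := dist_le_of_le_geometric_of_tendsto r _ hr h1 hl j
  rw [Real.dist_eq] at this
  refine this.trans (le_of_eq ?_)
  ring
end

section
lemma growth {n : ℕ} {d C₀ : ℝ} {Γ : Set (Euc n)} (hd1 : 1 < d) (hd0 : 0 < d) (hdn : d < (n:ℝ) - 1)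
    (hC₀ : 1 ≤ C₀) (hne : Γ.Nonempty) (hcl : IsClosed Γ) (hreg : AhlforsRegular n d C₀ Γ)
    {x₀ : Euc n} (hx₀ : x₀ ∈ Γ) {f : Euc n → ℝ} (hf : ContDiff ℝ 1 f)
    (hE : Enr n d Γ (gradient f) < ⊤)
    (h0 : Tendsto (fun j : ℕ => ⨍ y in ball x₀ ((2 : ℝ) ^ j), f y) atTop (𝓝 0)) :
    ∃ K : ℝ≥0∞, K ≠ ⊤ ∧ ∀ j : ℕ, ∫⁻ x in ball x₀ ((2:ℝ) ^ j), ‖f x‖ₑ ^ 2 * wt n d Γ x ≤ K * 4 ^ j := by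
  have hnull := null_of_strip hd0 hdn hC₀ hne hcl hreg
  obtain ⟨A, hAt, hA⟩ := wt_A1 hd0 hdn hC₀ hne hcl hreg
  obtain ⟨S, hS, hSb⟩ := wt_ball hd0 hdn hC₀ hne hcl hreg
  have hr1 : (2:ℝ) ^ ((1 - d) / 2) < 1 := Real.rpow_lt_one_of_one_lt_of_neg (by norm_num) (by linarith)
  have hr0 : (0:ℝ) < (2:ℝ) ^ ((1 - d) / 2) := by positivity
  obtain ⟨l, hl, hlb⟩ := tele hE hr1 hr0.le (Real.sqrt_nonneg (KK n))
    (fun j => avg_step2 hd0 hdn hne hcl hnull hx₀ j hf)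
  have hl0 : l = 0 := tendsto_nhds_unique hl h0
  subst hl0
  simp only [sub_zero] at hlb
  set E := Enr n d Γ (gradient f) with hEd
  set M := √(KK n) / (1 - (2:ℝ) ^ ((1 - d) / 2)) with hM
  set Q := M * E.toReal ^ (1 / 2 : ℝ) with hQ
  have hM0 : 0 ≤ M := div_nonneg (Real.sqrt_nonneg _) (by linarith)
  have hQ0 : 0 ≤ Q := by positivity
  refine ⟨2 * (4 * (A * 2 ^ n) * E) + 2 * ENNReal.ofReal (Q ^ 2 * S), ?_, fun j => ?_⟩
  · refine ENNReal.add_ne_top.2 ⟨?_, ?_⟩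
    · exact ENNReal.mul_ne_top (by norm_num) (ENNReal.mul_ne_top (ENNReal.mul_ne_top (by norm_num)
        (ENNReal.mul_ne_top hAt (ENNReal.pow_ne_top (by norm_num)))) hE.ne)
    · exact ENNReal.mul_ne_top (by norm_num) ENNReal.ofReal_ne_top
  set a := ⨍ y in ball x₀ ((2:ℝ) ^ j), f y with ha
  have hpt : ∀ x, ‖f x‖ₑ ^ 2 * wt n d Γ x ≤
      2 * (‖f x - a‖ₑ ^ 2 * wt n d Γ x) + 2 * (‖a‖ₑ ^ 2 * wt n d Γ x) := by
    intro x
    have : ‖f x‖ₑ ^ 2 ≤ 2 * ‖f x - a‖ₑ ^ 2 + 2 * ‖a‖ₑ ^ 2 := by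
      simp only [Real.enorm_eq_ofReal_abs]
      rw [← ENNReal.ofReal_pow (abs_nonneg _), ← ENNReal.ofReal_pow (abs_nonneg _), ← ENNReal.ofReal_pow (abs_nonneg _)]
      rw [show (2:ℝ≥0∞) = ENNReal.ofReal 2 by simp, ← ENNReal.ofReal_mul (by norm_num), ← ENNReal.ofReal_mul (by norm_num),
        ← ENNReal.ofReal_add (by positivity) (by positivity)]
      apply ENNReal.ofReal_le_ofReal
      rw [sq_abs, sq_abs, sq_abs]
      nlinarith [sq_nonneg (f x - a - a)]
    calc _ ≤ (2 * ‖f x - a‖ₑ ^ 2 + 2 * ‖a‖ₑ ^ 2) * wt n d Γ x := by gcongr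
      _ = _ := by ring
  have hm : Measurable (wt n d Γ) := wt_meas
  have hfm : Measurable f := hf.continuous.measurable
  calc _ ≤ ∫⁻ x in ball x₀ ((2:ℝ) ^ j), (2 * (‖f x - a‖ₑ ^ 2 * wt n d Γ x) + 2 * (‖a‖ₑ ^ 2 * wt n d Γ x)) :=
        lintegral_mono hpt
    _ = 2 * (∫⁻ x in ball x₀ ((2:ℝ) ^ j), ‖f x - a‖ₑ ^ 2 * wt n d Γ x)
        + 2 * (‖a‖ₑ ^ 2 * ∫⁻ x in ball x₀ ((2:ℝ) ^ j), wt n d Γ x) := by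
        rw [lintegral_add_left (by fun_prop), lintegral_const_mul _ (by fun_prop), lintegral_const_mul _ (by fun_prop),
          lintegral_const_mul _ (by fun_prop)]
    _ ≤ 2 * (4 * (A * 2 ^ n) * E * 4 ^ j) + 2 * (ENNReal.ofReal (Q ^ 2 * S) * 4 ^ j) := by
        refine add_le_add (mul_le_mul_right ?_ _) (mul_le_mul_right ?_ _)
        · refine (osc_wt hm hA hf x₀ (by positivity)).trans (le_of_eq ?_)
          rw [← Enr_fderiv, ← hEd]
          have : ENNReal.ofReal (2 * 2 ^ j) ^ 2 = 4 * 4 ^ j := by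
            rw [ENNReal.ofReal_mul (by norm_num), ENNReal.ofReal_pow (by norm_num), mul_pow, ← pow_mul, mul_comm j 2, pow_mul]
            norm_num
          rw [this]; ring
        · calc _ ≤ ENNReal.ofReal ((Q * ((2:ℝ) ^ ((1 - d) / 2)) ^ j) ^ 2) * ENNReal.ofReal (S * ((2:ℝ) ^ j) ^ (d + 1)) := by
                refine mul_le_mul' ?_ ?_
                · rw [Real.enorm_eq_ofReal_abs, ← ENNReal.ofReal_pow (abs_nonneg _)]
                  apply ENNReal.ofReal_le_ofReal
                  apply pow_le_pow_left₀ (abs_nonneg _)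
                  refine (hlb j).trans (le_of_eq ?_)
                  rw [hQ]; ring
                · exact hSb _ hx₀ _ (by positivity)
            _ = _ := by
                rw [show (4:ℝ≥0∞) = ENNReal.ofReal 4 by simp, ← ENNReal.ofReal_pow (by norm_num), ← ENNReal.ofReal_mul (by positivity),
                  ← ENNReal.ofReal_mul (by positivity)]
                congr 1
                have : (((2:ℝ) ^ ((1 - d) / 2)) ^ j) ^ 2 * ((2:ℝ) ^ j) ^ (d + 1) = 4 ^ j := by
                  rw [show (4:ℝ) = 2 ^ (2:ℝ) by norm_num]
                  rw [← Real.rpow_natCast, ← Real.rpow_natCast, ← Real.rpow_natCast, ← Real.rpow_natCast, ← Real.rpow_mul (by positivity),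
                    ← Real.rpow_mul (by positivity), ← Real.rpow_mul (by positivity), ← Real.rpow_mul (by positivity), ← Real.rpow_add (by norm_num)]
                  congr 1; push_cast; ring
                linear_combination Q ^ 2 * S * this
    _ = _ := by ring

lemma dyadic_pt {n : ℕ} (x₀ x : Euc n) (J : ℕ) (hx : x ∈ ball x₀ ((2:ℝ) ^ J)) :
    ENNReal.ofReal (1 / (1 + ‖x - x₀‖ ^ 2)) ≤
      ∑ j ∈ Finset.range (J + 1), 4 * (4⁻¹) ^ j * (ball x₀ ((2:ℝ) ^ j)).indicator (fun _ => (1:ℝ≥0∞)) x := by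
  classical
  have hex : ∃ j : ℕ, x ∈ ball x₀ ((2:ℝ) ^ j) := ⟨J, hx⟩
  set j := Nat.find hex with hj
  have h1 : x ∈ ball x₀ ((2:ℝ) ^ j) := Nat.find_spec hex
  have hjJ : j ≤ J := Nat.find_min' hex hx
  refine le_trans ?_ (Finset.single_le_sum (f := fun j => 4 * (4⁻¹:ℝ≥0∞) ^ j * (ball x₀ ((2:ℝ) ^ j)).indicator (fun _ => (1:ℝ≥0∞)) x)
    (fun _ _ => zero_le) (Finset.mem_range.2 (Nat.lt_succ_of_le hjJ)))
  simp only [indicator_of_mem h1, mul_one]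
  have : (4:ℝ≥0∞) * (4⁻¹) ^ j = ENNReal.ofReal (4 * (4⁻¹) ^ j) := by
    rw [ENNReal.ofReal_mul (by norm_num), ENNReal.ofReal_pow (by norm_num), ENNReal.ofReal_inv_of_pos (by norm_num)]
    norm_num
  rw [this]
  apply ENNReal.ofReal_le_ofReal
  rcases Nat.eq_zero_or_pos j with h | h
  · rw [h, pow_zero, mul_one]
    rw [div_le_iff₀ (by positivity)]
    nlinarith [sq_nonneg ‖x - x₀‖]
  · have hmin := Nat.find_min hex (m := j - 1) (by omega)
    obtain ⟨i, hi⟩ : ∃ i, j = i + 1 := ⟨j - 1, by omega⟩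
    rw [hi] at hmin ⊢
    simp only [Nat.add_sub_cancel, mem_ball, dist_eq_norm, not_lt] at hmin
    rw [pow_succ (4⁻¹:ℝ), div_le_iff₀ (by positivity)]
    have h2 : (4:ℝ) ^ i ≤ ‖x - x₀‖ ^ 2 := by
      rw [show (4:ℝ) = 2 ^ 2 by norm_num, ← pow_mul, mul_comm, pow_mul]
      exact pow_le_pow_left₀ (by positivity) hmin 2
    have h3 : (4⁻¹:ℝ) ^ i * 4 ^ i = 1 := by rw [← mul_pow]; norm_num
    have h4 : (0:ℝ) < (4⁻¹:ℝ) ^ i := by positivity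
    nlinarith [mul_le_mul_of_nonneg_left h2 h4.le]

lemma weighted_sum {n : ℕ} {x₀ : Euc n} {F : Euc n → ℝ≥0∞} (hF : Measurable F) {K : ℝ≥0∞}
    (h : ∀ j : ℕ, ∫⁻ x in ball x₀ ((2:ℝ) ^ j), F x ≤ K * 4 ^ j) (J : ℕ) :
    ∫⁻ x in ball x₀ ((2:ℝ) ^ J), ENNReal.ofReal (1 / (1 + ‖x - x₀‖ ^ 2)) * F x ≤ (J + 1) * (4 * K) := by
  calc _ ≤ ∫⁻ x in ball x₀ ((2:ℝ) ^ J), ∑ j ∈ Finset.range (J + 1), 4 * (4⁻¹) ^ j * (ball x₀ ((2:ℝ) ^ j)).indicator F x := by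
        refine setLIntegral_mono' measurableSet_ball fun x hx => ?_
        calc _ ≤ _ := mul_le_mul_left (dyadic_pt x₀ x J hx) _
          _ = _ := by
            rw [Finset.sum_mul]
            refine Finset.sum_congr rfl fun j _ => ?_
            by_cases hxj : x ∈ ball x₀ ((2:ℝ) ^ j)
            · simp [indicator_of_mem hxj]
            · simp [indicator_of_notMem hxj]
    _ ≤ ∫⁻ x, ∑ j ∈ Finset.range (J + 1), 4 * (4⁻¹) ^ j * (ball x₀ ((2:ℝ) ^ j)).indicator F x := setLIntegral_le_lintegral _ _
    _ = ∑ j ∈ Finset.range (J + 1), 4 * (4⁻¹) ^ j * ∫⁻ x in ball x₀ ((2:ℝ) ^ j), F x := by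
        rw [lintegral_finsetSum _ (fun j _ => (hF.indicator measurableSet_ball).const_mul _)]
        refine Finset.sum_congr rfl fun j _ => ?_
        rw [lintegral_const_mul _ (hF.indicator measurableSet_ball), lintegral_indicator measurableSet_ball]
    _ ≤ ∑ j ∈ Finset.range (J + 1), 4 * K := by
        refine Finset.sum_le_sum fun j _ => ?_
        calc _ ≤ 4 * (4⁻¹:ℝ≥0∞) ^ j * (K * 4 ^ j) := by gcongr; exact h j
          _ = 4 * K * ((4⁻¹:ℝ≥0∞) ^ j * 4 ^ j) := by ring
          _ = 4 * K := by
            rw [← mul_pow, ENNReal.inv_mul_cancel (by norm_num) (by norm_num), one_pow, mul_one]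
    _ = _ := by simp
end

section
lemma logcut_fderiv {n : ℕ} (x₀ x : Euc n) : ∃ L : Euc n →L[ℝ] ℝ,
    HasFDerivAt (fun x => Real.log (1 + ‖x - x₀‖ ^ 2)) L x ∧ ‖L‖ ^ 2 ≤ 4 * (1 / (1 + ‖x - x₀‖ ^ 2)) := by
  have h1 : HasFDerivAt (fun x : Euc n => 1 + ‖x - x₀‖ ^ 2) (2 • (innerSL ℝ (x - x₀)).comp (ContinuousLinearMap.id ℝ (Euc n))) x :=
    (((hasFDerivAt_id x).sub_const x₀).norm_sq).const_add 1
  have hp : 0 < 1 + ‖x - x₀‖ ^ 2 := by positivity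
  refine ⟨_, h1.log hp.ne', ?_⟩
  set t := ‖x - x₀‖ with ht
  rw [norm_smul, ContinuousLinearMap.comp_id, norm_inv, Real.norm_eq_abs, abs_of_pos hp]
  have h2 : ‖(2:ℕ) • innerSL ℝ (x - x₀)‖ ≤ 2 * t := by
    refine (norm_nsmul_le).trans ?_
    rw [innerSL_apply_norm]; norm_num [ht]
  calc ((1 + t ^ 2)⁻¹ * ‖(2:ℕ) • innerSL ℝ (x - x₀)‖) ^ 2 ≤ ((1 + t ^ 2)⁻¹ * (2 * t)) ^ 2 := by gcongr
    _ ≤ _ := by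
      rw [inv_mul_eq_div, div_pow, div_le_iff₀ (by positivity)]
      field_simp
      nlinarith [sq_nonneg t]

lemma logcut {n : ℕ} (x₀ : Euc n) : ∃ D : ℝ, 0 < D ∧ ∀ N : ℕ, 0 < N → ∃ η : Euc n → ℝ,
    ContDiff ℝ (⊤:ℕ∞) η ∧ HasCompactSupport η ∧ (∀ x, |η x - 1| ≤ 1) ∧
    (∀ x, Real.log (1 + ‖x - x₀‖ ^ 2) ≤ N → η x = 1) ∧
    (∀ x, x ∉ ball x₀ ((2:ℝ) ^ (2 * N)) → fderiv ℝ η x = 0) ∧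
    (∀ x, ‖fderiv ℝ η x‖ ^ 2 ≤ D / N ^ 2 * (1 / (1 + ‖x - x₀‖ ^ 2))) := by
  obtain ⟨B, hB, hBd⟩ := st_deriv_bdd
  refine ⟨B ^ 2 * 4, by positivity, fun N hN => ?_⟩
  have hN' : (0:ℝ) < N := by exact_mod_cast hN
  set η : Euc n → ℝ := fun x => Real.smoothTransition (2 - Real.log (1 + ‖x - x₀‖ ^ 2) / N) with hη
  have hsm : ContDiff ℝ (⊤:ℕ∞) η := by
    refine Real.smoothTransition.contDiff.comp ?_
    refine contDiff_const.sub (ContDiff.div_const ?_ _)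
    refine ContDiff.log ?_ (fun x => by positivity)
    exact contDiff_const.add ((contDiff_id.sub contDiff_const).norm_sq ℝ)
  have h2 : ∀ x, 2 * (N:ℝ) ≤ Real.log (1 + ‖x - x₀‖ ^ 2) → η x = 0 := by
    intro x hx
    apply Real.smoothTransition.zero_of_nonpos
    rw [sub_nonpos, le_div_iff₀ hN']; exact hx
  have h3 : ∀ x, x ∉ ball x₀ ((2:ℝ) ^ (2 * N)) → 2 * (N:ℝ) ≤ Real.log (1 + ‖x - x₀‖ ^ 2) := by
    intro x hx
    simp only [mem_ball, dist_eq_norm, not_lt] at hx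
    rw [Real.le_log_iff_exp_le (by positivity)]
    have he : Real.exp (2 * (N:ℝ)) = (Real.exp 1 ^ 2) ^ N := by
      rw [← pow_mul, ← Real.exp_nat_mul]; congr 1; push_cast; ring
    rw [he]
    have h16 : Real.exp 1 ^ 2 ≤ 16 := by
      nlinarith [Real.exp_one_lt_d9, Real.exp_pos 1]
    calc (Real.exp 1 ^ 2) ^ N ≤ 16 ^ N := by gcongr
      _ = ((2:ℝ) ^ (2 * N)) ^ 2 := by rw [← pow_mul, show 2 * N * 2 = 4 * N by ring, pow_mul]; norm_num
      _ ≤ ‖x - x₀‖ ^ 2 := by gcongr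
      _ ≤ _ := by linarith
  have hbd : ∀ x, ‖fderiv ℝ η x‖ ^ 2 ≤ B ^ 2 * 4 / N ^ 2 * (1 / (1 + ‖x - x₀‖ ^ 2)) := by
    intro x
    obtain ⟨L, hL, hLb⟩ := logcut_fderiv x₀ x
    have hst : HasDerivAt Real.smoothTransition _ (2 - Real.log (1 + ‖x - x₀‖ ^ 2) / N) :=
      (Real.smoothTransition.contDiff (n := 1)).differentiable (by simp) _ |>.hasDerivAt
    have hin : HasFDerivAt (fun x => 2 - Real.log (1 + ‖x - x₀‖ ^ 2) / N) (-((N:ℝ)⁻¹ • L)) x := by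
      have := (hL.const_mul ((N:ℝ)⁻¹)).const_sub 2
      simpa [div_eq_inv_mul] using this
    have := (hst.comp_hasFDerivAt x hin).fderiv
    rw [show η = Real.smoothTransition ∘ (fun x => 2 - Real.log (1 + ‖x - x₀‖ ^ 2) / N) from rfl, this,
      norm_smul, norm_neg, norm_smul, norm_inv, Real.norm_eq_abs, Real.norm_eq_abs, abs_of_pos hN', mul_pow, mul_pow]
    calc _ ≤ B ^ 2 * ((N:ℝ)⁻¹ ^ 2 * (4 * (1 / (1 + ‖x - x₀‖ ^ 2)))) := by
          gcongr
          exact hBd _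
      _ = _ := by field_simp
  refine ⟨η, hsm, ?_, ?_, ?_, ?_, hbd⟩
  · refine HasCompactSupport.of_support_subset_isCompact (isCompact_closedBall x₀ ((2:ℝ) ^ (2 * N))) ?_
    intro x hx
    by_contra hxc
    exact hx (h2 x (h3 x fun h => hxc (ball_subset_closedBall h)))
  · intro x
    have a1 := Real.smoothTransition.nonneg (2 - Real.log (1 + ‖x - x₀‖ ^ 2) / N)
    have a2 := Real.smoothTransition.le_one (2 - Real.log (1 + ‖x - x₀‖ ^ 2) / N)
    rw [abs_le]; constructor <;> simp only [hη] <;> linarith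
  · intro x hx
    apply Real.smoothTransition.one_of_one_le
    have : Real.log (1 + ‖x - x₀‖ ^ 2) / N ≤ 1 := by rw [div_le_one hN']; exact hx
    linarith
  · intro x hx
    have : η x = 0 := h2 x (h3 x hx)
    apply IsLocalMin.fderiv_eq_zero
    refine Filter.Eventually.of_forall fun y => ?_
    rw [this]; exact Real.smoothTransition.nonneg _
end

section
lemma aux_sq {a b c e f : ℝ} (ha : 0 ≤ a) (hb : 0 ≤ b) (hc : 0 ≤ c) (he : 0 ≤ e) (hf : 0 ≤ f)
    (h : a ^ 2 ≤ 2 * (b ^ 2 * c ^ 2) + 2 * (e ^ 2 * f ^ 2)) :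
    ENNReal.ofReal a ^ 2 ≤ 2 * (ENNReal.ofReal b ^ 2 * ENNReal.ofReal c ^ 2) +
      2 * (ENNReal.ofReal e ^ 2 * ENNReal.ofReal f ^ 2) := by
  rw [show (2:ℝ≥0∞) = ENNReal.ofReal 2 by simp]
  rw [← ENNReal.ofReal_pow ha, ← ENNReal.ofReal_pow hb, ← ENNReal.ofReal_pow hc, ← ENNReal.ofReal_pow he,
    ← ENNReal.ofReal_pow hf]
  rw [← ENNReal.ofReal_mul (by positivity), ← ENNReal.ofReal_mul (by positivity), ← ENNReal.ofReal_mul (by positivity),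
    ← ENNReal.ofReal_mul (by positivity), ← ENNReal.ofReal_add (by positivity) (by positivity)]
  exact ENNReal.ofReal_le_ofReal h

lemma grad_mul_bd {n : ℕ} {η f : Euc n → ℝ} (hη : ContDiff ℝ (⊤:ℕ∞) η) (hf : ContDiff ℝ (⊤:ℕ∞) f) (z : Euc n) :
    ‖gradient (fun x => η x * f x) z - gradient f z‖ₑ ^ 2 ≤
      2 * (‖η z - 1‖ₑ ^ 2 * ‖fderiv ℝ f z‖ₑ ^ 2) + 2 * (‖f z‖ₑ ^ 2 * ‖fderiv ℝ η z‖ₑ ^ 2) := by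
  have h1 : gradient (fun x => η x * f x) z - gradient f z =
      (InnerProductSpace.toDual ℝ (Euc n)).symm (fderiv ℝ (fun x => η x * f x) z - fderiv ℝ f z) := by
    rw [map_sub]; rfl
  have h2 : ‖gradient (fun x => η x * f x) z - gradient f z‖ = ‖(η z - 1) • fderiv ℝ f z + f z • fderiv ℝ η z‖ := by
    rw [h1, LinearIsometryEquiv.norm_map, fderiv_fun_mul (hη.differentiable (by simp) z) (hf.differentiable (by simp) z)]
    congr 1
    module
  have h3 : ‖gradient (fun x => η x * f x) z - gradient f z‖ ^ 2 ≤
      2 * (‖η z - 1‖ ^ 2 * ‖fderiv ℝ f z‖ ^ 2) + 2 * (‖f z‖ ^ 2 * ‖fderiv ℝ η z‖ ^ 2) := by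
    rw [h2]
    calc _ ≤ (‖η z - 1‖ * ‖fderiv ℝ f z‖ + ‖f z‖ * ‖fderiv ℝ η z‖) ^ 2 := by
          gcongr
          refine (norm_add_le _ _).trans ?_
          rw [norm_smul, norm_smul]
      _ ≤ _ := by nlinarith [sq_nonneg (‖η z - 1‖ * ‖fderiv ℝ f z‖ - ‖f z‖ * ‖fderiv ℝ η z‖)]
  simp only [← ofReal_norm]
  exact aux_sq (norm_nonneg _) (norm_nonneg _) (norm_nonneg _) (norm_nonneg _) (norm_nonneg _) h3

lemma smooth_case {n : ℕ} {d C₀ : ℝ} {Γ : Set (Euc n)} (hd1 : 1 < d) (hd0 : 0 < d) (hdn : d < (n:ℝ) - 1)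
    (hC₀ : 1 ≤ C₀) (hne : Γ.Nonempty) (hcl : IsClosed Γ) (hreg : AhlforsRegular n d C₀ Γ)
    {x₀ : Euc n} (hx₀ : x₀ ∈ Γ) {f : Euc n → ℝ} (hf : ContDiff ℝ (⊤:ℕ∞) f)
    (hE : Enr n d Γ (gradient f) < ⊤)
    (h0 : Tendsto (fun j : ℕ => ⨍ y in ball x₀ ((2 : ℝ) ^ j), f y) atTop (𝓝 0)) (R : ℝ)
    {ε : ℝ≥0∞} (hε : 0 < ε) :
    ∃ g : Euc n → ℝ, ContDiff ℝ (⊤:ℕ∞) g ∧ HasCompactSupport g ∧ (∀ x ∈ ball x₀ R, g x = f x) ∧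
      Enr n d Γ (fun z => gradient g z - gradient f z) < ε := by
  obtain ⟨K, hK, hKb⟩ := growth hd1 hd0 hdn hC₀ hne hcl hreg hx₀ (hf.of_le (by simp)) hE h0
  obtain ⟨D, hD, hcut⟩ := logcut x₀
  choose η hη1 hη2 hη3 hη4 hη5 hη6 using fun k : ℕ => hcut (k + 1) k.succ_pos
  have hwm : Measurable (wt n d Γ) := wt_meas
  have hfm : Measurable f := hf.continuous.measurable
  have hdm : ∀ {q : Euc n → ℝ}, ContDiff ℝ (⊤:ℕ∞) q → Measurable fun z => ‖fderiv ℝ q z‖ₑ := fun hq =>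
    (hq.continuous_fderiv (by simp)).measurable.enorm
  have hb : ∀ k, Enr n d Γ (fun z => gradient (fun x => η k x * f x) z - gradient f z) ≤
      2 * (∫⁻ z, ‖η k z - 1‖ₑ ^ 2 * (‖fderiv ℝ f z‖ₑ ^ 2 * wt n d Γ z)) +
        2 * (ENNReal.ofReal (3 * D * (1 / ((k:ℝ) + 1))) * (4 * K)) := by
    intro k
    have hηm : Measurable (η k) := (hη1 k).continuous.measurable
    have m1 := hdm hf
    have m2 := hdm (hη1 k)
    calc _ ≤ ∫⁻ z, (2 * (‖η k z - 1‖ₑ ^ 2 * (‖fderiv ℝ f z‖ₑ ^ 2 * wt n d Γ z)) +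
          2 * (‖fderiv ℝ (η k) z‖ₑ ^ 2 * (‖f z‖ₑ ^ 2 * wt n d Γ z))) := by
          refine lintegral_mono fun z => ?_
          calc _ ≤ _ := mul_le_mul_left (grad_mul_bd (hη1 k) hf z) _
            _ = _ := by ring
      _ = 2 * (∫⁻ z, ‖η k z - 1‖ₑ ^ 2 * (‖fderiv ℝ f z‖ₑ ^ 2 * wt n d Γ z)) +
          2 * (∫⁻ z, ‖fderiv ℝ (η k) z‖ₑ ^ 2 * (‖f z‖ₑ ^ 2 * wt n d Γ z)) := by
          rw [lintegral_add_left (by fun_prop), lintegral_const_mul _ (by fun_prop), lintegral_const_mul _ (by fun_prop)]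
      _ ≤ _ := by
          refine add_le_add le_rfl (mul_le_mul_right ?_ _)
          set N := k + 1 with hN
          have hNp : (0:ℝ) < N := by rw [hN]; positivity
          calc _ ≤ ∫⁻ z, (ball x₀ ((2:ℝ) ^ (2 * N))).indicator (fun z => ENNReal.ofReal (D / (N:ℝ) ^ 2) *
                  (ENNReal.ofReal (1 / (1 + ‖z - x₀‖ ^ 2)) * (‖f z‖ₑ ^ 2 * wt n d Γ z))) z := by
                refine lintegral_mono fun z => ?_
                by_cases hz : z ∈ ball x₀ ((2:ℝ) ^ (2 * N))
                · rw [indicator_of_mem hz, ← mul_assoc (ENNReal.ofReal _), ← ENNReal.ofReal_mul (by positivity)]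
                  refine mul_le_mul_left ?_ _
                  rw [← ofReal_norm, ← ENNReal.ofReal_pow (norm_nonneg _)]
                  exact ENNReal.ofReal_le_ofReal (hη6 k z)
                · rw [hη5 k z hz, show ‖(0 : Euc n →L[ℝ] ℝ)‖ₑ = 0 by rw [← ofReal_norm, norm_zero, ENNReal.ofReal_zero]]
                  simp
            _ = ENNReal.ofReal (D / (N:ℝ) ^ 2) * ∫⁻ z in ball x₀ ((2:ℝ) ^ (2 * N)),
                  ENNReal.ofReal (1 / (1 + ‖z - x₀‖ ^ 2)) * (‖f z‖ₑ ^ 2 * wt n d Γ z) := by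
                rw [lintegral_indicator measurableSet_ball, lintegral_const_mul _ (by fun_prop)]
            _ ≤ ENNReal.ofReal (D / (N:ℝ) ^ 2) * (((2 * N : ℕ) + 1) * (4 * K)) :=
                mul_le_mul_right (weighted_sum (by fun_prop) hKb (2 * N)) _
            _ ≤ _ := by
                rw [← mul_assoc]
                refine mul_le_mul_left ?_ _
                rw [show (((2 * N : ℕ) : ℝ≥0∞) + 1) = ENNReal.ofReal (2 * N + 1) by
                  rw [ENNReal.ofReal_add (by positivity) (by norm_num), ENNReal.ofReal_mul (by norm_num)]; simp,
                  ← ENNReal.ofReal_mul (by positivity)]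
                apply ENNReal.ofReal_le_ofReal
                have h1N : (1:ℝ) ≤ N := by rw [hN]; push_cast; linarith [(Nat.cast_nonneg k : (0:ℝ) ≤ k)]
                rw [show (k:ℝ) + 1 = N by rw [hN]; push_cast; ring]
                rw [div_mul_eq_mul_div, mul_one_div, div_le_div_iff₀ (by positivity) hNp]
                nlinarith [mul_pos hD hNp, mul_nonneg (mul_pos hD hNp).le (sub_nonneg.2 h1N)]
  have hlog : ∀ r : ℝ, ∀ᶠ k : ℕ in atTop, ∀ x, ‖x - x₀‖ ≤ r → η k x = 1 := by
    intro r
    have := tendsto_natCast_atTop_atTop (R := ℝ) |>.eventually_ge_atTop (Real.log (1 + r ^ 2))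
    filter_upwards [this] with k hk x hx
    apply hη4
    have : Real.log (1 + ‖x - x₀‖ ^ 2) ≤ Real.log (1 + r ^ 2) := by
      apply Real.log_le_log (by positivity)
      gcongr
    push_cast; linarith
  have t1 : Tendsto (fun k => ∫⁻ z, ‖η k z - 1‖ₑ ^ 2 * (‖fderiv ℝ f z‖ₑ ^ 2 * wt n d Γ z)) atTop (𝓝 0) := by
    have m1 := hdm hf
    have := tendsto_lintegral_of_dominated_convergence (μ := volume)
      (F := fun k z => ‖η k z - 1‖ₑ ^ 2 * (‖fderiv ℝ f z‖ₑ ^ 2 * wt n d Γ z)) (f := fun _ => 0)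
      (fun z => ‖fderiv ℝ f z‖ₑ ^ 2 * wt n d Γ z) ?_ ?_ ?_ ?_
    · simpa using this
    · intro k
      have hηm : Measurable (η k) := (hη1 k).continuous.measurable
      fun_prop
    · intro k
      refine Eventually.of_forall fun z => ?_
      refine mul_le_of_le_one_left' (pow_le_one' ?_ 2)
      rw [Real.enorm_eq_ofReal_abs]
      exact ENNReal.ofReal_le_one.2 (hη3 k z)
    · rw [← Enr_fderiv]; exact hE.ne
    · refine Eventually.of_forall fun z => ?_
      refine tendsto_const_nhds.congr' ?_
      filter_upwards [hlog ‖z - x₀‖] with k hk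
      rw [hk z le_rfl]; simp
  have t2 : Tendsto (fun k : ℕ => ENNReal.ofReal (3 * D * (1 / ((k:ℝ) + 1))) * (4 * K)) atTop (𝓝 0) := by
    have h := (tendsto_one_div_add_atTop_nhds_zero_nat (𝕜 := ℝ)).const_mul (3 * D)
    rw [mul_zero] at h
    have h2 := ENNReal.tendsto_ofReal h
    rw [ENNReal.ofReal_zero] at h2
    have := ENNReal.Tendsto.mul_const (b := 4 * K) h2 (Or.inr (ENNReal.mul_ne_top (by norm_num) hK))
    simpa using this
  have t3 := (ENNReal.Tendsto.const_mul (a := 2) t1 (Or.inr (by norm_num))).add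
    (ENNReal.Tendsto.const_mul (a := 2) t2 (Or.inr (by norm_num)))
  simp only [mul_zero, add_zero] at t3
  obtain ⟨k, hk1, hk2⟩ := ((t3.eventually_lt_const hε).and (hlog R)).exists
  refine ⟨fun x => η k x * f x, (hη1 k).mul hf, (hη2 k).mul_right, fun x hx => ?_, (hb k).trans_lt hk1⟩
  show η k x * f x = f x
  rw [hk2 x (by rw [← dist_eq_norm]; exact (mem_ball.1 hx).le), one_mul]
end

section
lemma avg_sub_const {n : ℕ} {f : Euc n → ℝ} (hf : Continuous f) (c : Euc n) {R : ℝ} (hR : 0 < R) (l : ℝ) :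
    (⨍ y in ball c R, (f y - l)) = (⨍ y in ball c R, f y) - l := by
  have h0 : volume (ball c R) ≠ 0 := (measure_ball_pos _ _ hR).ne'
  have ht : volume (ball c R) ≠ ⊤ := measure_ball_lt_top.ne
  rw [setAverage_eq, setAverage_eq, integral_sub (cont_intOn hf c R) (integrableOn_const ht), smul_sub]
  congr 1
  rw [setIntegral_const, smul_smul, inv_mul_cancel₀, one_smul]
  exact (ENNReal.toReal_ne_zero.2 ⟨h0, ht⟩)

lemma approx {n : ℕ} {d C₀ : ℝ} {Γ : Set (Euc n)} (hd1 : 1 < d) (hd0 : 0 < d) (hdn : d < (n:ℝ) - 1)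
    (hC₀ : 1 ≤ C₀) (hne : Γ.Nonempty) (hcl : IsClosed Γ) (hreg : AhlforsRegular n d C₀ Γ)
    {x₀ : Euc n} (hx₀ : x₀ ∈ Γ) {u : Euc n → ℝ} {v : Euc n → Euc n}
    (hu : LocallyIntegrable u volume) (hv : LocallyIntegrable v volume) (hE : Enr n d Γ v < ⊤)
    (h : WG u v univ)
    (h0 : Tendsto (fun j : ℕ => ⨍ y in ball x₀ ((2 : ℝ) ^ j), u y) atTop (𝓝 0)) (R : ℝ)
    {ε : ℝ≥0∞} (hε : 0 < ε) :
    ∃ g : Euc n → ℝ, ContDiff ℝ (⊤:ℕ∞) g ∧ HasCompactSupport g ∧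
      ∫⁻ x in ball x₀ R, ‖g x - u x‖ₑ < ε ∧
      Enr n d Γ (fun z => gradient g z - v z) < ε := by
  have hnull := null_of_strip hd0 hdn hC₀ hne hcl hreg
  obtain ⟨A, hAt, hA⟩ := wt_A1 hd0 hdn hC₀ hne hcl hreg
  have hwm : Measurable (wt n d Γ) := wt_meas
  have hr1 : (2:ℝ) ^ ((1 - d) / 2) < 1 := Real.rpow_lt_one_of_one_lt_of_neg (by norm_num) (by linarith)
  have hr0 : (0:ℝ) < (2:ℝ) ^ ((1 - d) / 2) := by positivity
  set r := (2:ℝ) ^ ((1 - d) / 2) with hr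
  set E' := 2 ^ n * A * Enr n d Γ v with hE'
  have hE't : E' < ⊤ := (ENNReal.mul_ne_top (ENNReal.mul_ne_top (ENNReal.pow_ne_top (by norm_num)) hAt) hE.ne).lt_top
  have hsm : ∀ k, ContDiff ℝ (⊤:ℕ∞) (moll k u) := fun k => moll_contDiff k hu
  have hgr : ∀ k, gradient (moll k u) = moll k v := moll_gradient hu hv h
  have hEk : ∀ k, Enr n d Γ (gradient (moll k u)) ≤ E' := by
    intro k
    rw [hgr]
    have := moll_energy k (p := 2) (by norm_num) hwm hA hv.aestronglyMeasurable
    simpa [Enr, hE'] using this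
  have htele := fun k => tele hE't hr1 hr0.le (Real.sqrt_nonneg (KK n))
    (fun j => (avg_step2 hd0 hdn hne hcl hnull hx₀ j ((hsm k).of_le (by simp))).trans
      (mul_le_mul_right (ENNReal.rpow_le_rpow (hEk k) (by norm_num)) _))
  choose l hl hlb using htele
  set M := √(KK n) / (1 - r) with hM
  have hl0 : Tendsto l atTop (𝓝 0) := by
    rw [Metric.tendsto_atTop]
    intro e he
    have t1 : Tendsto (fun j : ℕ => M * r ^ j * E'.toReal ^ (1 / 2 : ℝ)) atTop (𝓝 0) := by
      have := ((tendsto_pow_atTop_nhds_zero_of_lt_one hr0.le hr1).const_mul M).mul_const (E'.toReal ^ (1 / 2 : ℝ))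
      simpa using this
    have t2 := h0.abs
    rw [abs_zero] at t2
    have e3 : 0 < e / 3 := by positivity
    obtain ⟨j, hj1, hj2⟩ := ((t1.eventually_lt_const e3).and (t2.eventually_lt_const e3)).exists
    have t3 := Metric.tendsto_atTop.1 (avg_moll hu x₀ ((2:ℝ) ^ j)) (e / 3) e3
    obtain ⟨k0, hk0⟩ := t3
    refine ⟨k0, fun k hk => ?_⟩
    have a1 := hk0 k hk
    have a2 := hlb k j
    rw [Real.dist_eq] at a1 ⊢
    rw [sub_zero]
    have b1 := abs_lt.1 a1
    have b2 := abs_le.1 a2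
    have b3 := abs_lt.1 hj2
    rw [abs_lt]
    constructor <;> linarith
  have tL : Tendsto (fun k => (∫⁻ x in ball x₀ R, ‖moll k u x - u x‖ₑ) + ‖l k‖ₑ * volume (ball x₀ R)) atTop (𝓝 0) := by
    have a1 := moll_l1loc hu x₀ R
    have a2 : Tendsto (fun k => ‖l k‖ₑ * volume (ball x₀ R)) atTop (𝓝 0) := by
      have : Tendsto (fun k => ‖l k‖ₑ) atTop (𝓝 0) := by
        have := hl0.enorm
        simpa using this
      have := ENNReal.Tendsto.mul_const (b := volume (ball x₀ R)) this (Or.inr measure_ball_lt_top.ne)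
      simpa using this
    simpa using a1.add a2
  have tE : Tendsto (fun k => Enr n d Γ (fun z => moll k v z - v z)) atTop (𝓝 0) := by
    have a1 := Enr_moll_tendsto hd0 hdn hC₀ hne hcl hreg hv hE
    have a2 : Tendsto (fun k => eLpNorm (moll k v - v) 2 (volume.withDensity (wt n d Γ)) ^ 2) atTop (𝓝 (0 ^ 2)) :=
      (ENNReal.continuous_pow 2).continuousAt.tendsto.comp a1
    simp only [ne_eq, OfNat.ofNat_ne_zero, not_false_eq_true, zero_pow] at a2
    refine a2.congr fun k => ?_
    rw [← Enr_eLp']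
    · rfl
    · exact (moll_contDiff k hv).continuous.aestronglyMeasurable.sub hv.aestronglyMeasurable
  have hε4 : 0 < ε / 4 := ENNReal.div_pos hε.ne' (by norm_num)
  obtain ⟨k, hk1, hk2⟩ := ((tL.eventually_lt_const hε).and (tE.eventually_lt_const hε4)).exists
  set f : Euc n → ℝ := fun x => moll k u x - l k with hf
  have hfs : ContDiff ℝ (⊤:ℕ∞) f := (hsm k).sub contDiff_const
  have hfg : gradient f = moll k v := by
    rw [← hgr k]
    funext x
    simp only [gradient, hf, fderiv_sub_const]
  have hfE : Enr n d Γ (gradient f) < ⊤ := by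
    rw [hfg, ← hgr k]; exact (hEk k).trans_lt hE't
  have hf0 : Tendsto (fun j : ℕ => ⨍ y in ball x₀ ((2 : ℝ) ^ j), f y) atTop (𝓝 0) := by
    have := (hl k).sub_const (l k)
    rw [sub_self] at this
    refine this.congr fun j => ?_
    rw [hf, avg_sub_const (hsm k).continuous x₀ (by positivity)]
  obtain ⟨g, hg1, hg2, hg3, hg4⟩ := smooth_case hd1 hd0 hdn hC₀ hne hcl hreg hx₀ hfs hfE hf0 R hε4
  refine ⟨g, hg1, hg2, lt_of_le_of_lt ?_ hk1, ?_⟩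
  · calc ∫⁻ x in ball x₀ R, ‖g x - u x‖ₑ ≤ ∫⁻ x in ball x₀ R, (‖moll k u x - u x‖ₑ + ‖l k‖ₑ) := by
          refine setLIntegral_mono' measurableSet_ball fun x hx => ?_
          rw [hg3 x hx, hf]
          simp only
          rw [show moll k u x - l k - u x = (moll k u x - u x) - l k by ring]
          exact enorm_sub_le
      _ = _ := by rw [lintegral_add_right _ measurable_const, setLIntegral_const]
  · have hgm : Measurable fun z => ‖gradient g z - gradient f z‖ₑ := by
      have q : ∀ {q : Euc n → ℝ}, ContDiff ℝ (⊤:ℕ∞) q → Continuous (gradient q) := fun hq =>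
        (InnerProductSpace.toDual ℝ (Euc n)).symm.continuous.comp (hq.continuous_fderiv (by simp))
      exact ((q hg1).sub (q hfs)).measurable.enorm
    calc _ ≤ ∫⁻ z, (2 * (‖gradient g z - gradient f z‖ₑ ^ 2 * wt n d Γ z) + 2 * (‖moll k v z - v z‖ₑ ^ 2 * wt n d Γ z)) := by
          refine lintegral_mono fun z => ?_
          have : ‖gradient g z - v z‖ ^ 2 ≤ 2 * (‖gradient g z - gradient f z‖ ^ 2 * 1 ^ 2) + 2 * (‖moll k v z - v z‖ ^ 2 * 1 ^ 2) := by
            have h1 : ‖gradient g z - v z‖ ≤ ‖gradient g z - gradient f z‖ + ‖moll k v z - v z‖ := by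
              rw [← hfg]
              exact norm_sub_le_norm_sub_add_norm_sub _ _ _
            nlinarith [norm_nonneg (gradient g z - v z), sq_nonneg (‖gradient g z - gradient f z‖ - ‖moll k v z - v z‖)]
          have := aux_sq (norm_nonneg _) (norm_nonneg _) zero_le_one (norm_nonneg _) zero_le_one this
          simp only [ENNReal.ofReal_one, one_pow, mul_one, ofReal_norm] at this
          calc _ ≤ _ := mul_le_mul_left this _
            _ = _ := by ring
      _ = 2 * Enr n d Γ (fun z => gradient g z - gradient f z) + 2 * Enr n d Γ (fun z => moll k v z - v z) := by
          rw [lintegral_add_left (by fun_prop), lintegral_const_mul _ (by fun_prop), lintegral_const_mul' _ _ (by norm_num)]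
          rfl
      _ < 2 * (ε / 4) + 2 * (ε / 4) := by
          refine ENNReal.add_lt_add ?_ ?_
          · exact ENNReal.mul_lt_mul_right (by norm_num) (by norm_num) hg4
          · exact ENNReal.mul_lt_mul_right (by norm_num) (by norm_num) hk2
      _ = ε := by
          rw [← add_mul, show (2:ℝ≥0∞) + 2 = 4 by norm_num]
          exact ENNReal.mul_div_cancel (by norm_num) (by norm_num)
end

/-- when `d > 1`, averages of `u ∈ W` over the balls `B(x₀, 2^j)` converge
to a finite limit `u⁰`, with a quantitative rate, and functions with `u⁰ = 0` are
approximated by smooth compactly supported functions. -/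
theorem statement8 (n : ℕ) (hn : 2 ≤ n) (d C₀ : ℝ) (hd0 : 0 < d)
    (hdn : d < (n : ℝ) - 1) (hC₀ : 1 ≤ C₀) (hd1 : 1 < d) :
    ∃ C : ℝ, 0 < C ∧
      ∀ Γ : Set (Euc n), Γ.Nonempty → IsClosed Γ → AhlforsRegular n d C₀ Γ →
        ∀ x₀ ∈ Γ, ∀ u v, MemW n d Γ u v → LocallyIntegrable u volume →
          (∃ u0 : ℝ,
            Tendsto (fun j : ℕ => ⨍ y in ball x₀ ((2 : ℝ) ^ j), u y) atTop (𝓝 u0) ∧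
            ∀ j : ℕ,
              |(⨍ y in ball x₀ ((2 : ℝ) ^ j), u y) - u0| ≤
                C * (2 : ℝ) ^ ((j : ℝ) * (1 - d) / 2) *
                  (∫⁻ z in Γᶜ, ENNReal.ofReal (‖v z‖ ^ 2) ∂(measW n d Γ)).toReal
                    ^ ((1 : ℝ) / 2)) ∧
          (Tendsto (fun j : ℕ => ⨍ y in ball x₀ ((2 : ℝ) ^ j), u y) atTop (𝓝 0) →
            ∃ uk : ℕ → Euc n → ℝ,
              (∀ k, ContDiff ℝ (⊤ : ℕ∞) (uk k) ∧ HasCompactSupport (uk k)) ∧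
              (∀ K : Set (Euc n), IsCompact K →
                Tendsto (fun k => ∫ y in K, |uk k y - u y|) atTop (𝓝 0)) ∧
              Tendsto
                (fun k => ∫⁻ z in Γᶜ,
                  ENNReal.ofReal (‖gradient (uk k) z - v z‖ ^ 2) ∂(measW n d Γ))
                atTop (𝓝 0)) := by
  have hr1 : (2:ℝ) ^ ((1 - d) / 2) < 1 := Real.rpow_lt_one_of_one_lt_of_neg (by norm_num) (by linarith)
  have hr0 : (0:ℝ) < (2:ℝ) ^ ((1 - d) / 2) := by positivity
  refine ⟨√(KK n) / (1 - (2:ℝ) ^ ((1 - d) / 2)), div_pos (Real.sqrt_pos.2 (KK_pos n)) (by linarith), ?_⟩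
  intro Γ hne hcl hreg x₀ hx₀ u v hm hu
  have hnull := null_of_strip hd0 hdn hC₀ hne hcl hreg
  obtain ⟨v', hv'eq, hv', hEq, hE, hWG⟩ := setup hd0 hdn hC₀ hne hcl hreg hm hu
  refine ⟨?_, fun h0 => ?_⟩
  · obtain ⟨l, hl, hlb⟩ := tele hE hr1 hr0.le (Real.sqrt_nonneg (KK n))
      (fun j => avg_step3 hd0 hdn hC₀ hne hcl hreg hx₀ j hu hv' hE hWG)
    refine ⟨l, hl, fun j => ?_⟩
    rw [← hEq]
    refine (hlb j).trans (le_of_eq ?_)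
    congr 2
    rw [← Real.rpow_natCast, ← Real.rpow_mul (by norm_num)]
    congr 1; ring
  · choose g hg1 hg2 hg3 hg4 using fun m : ℕ => approx hd1 hd0 hdn hC₀ hne hcl hreg hx₀ hu hv' hE hWG h0 (m:ℝ)
      (ε := ENNReal.ofReal (1 / ((m:ℝ) + 1))) (ENNReal.ofReal_pos.2 (by positivity))
    have ht : Tendsto (fun m : ℕ => ENNReal.ofReal (1 / ((m:ℝ) + 1))) atTop (𝓝 0) := by
      have := ENNReal.tendsto_ofReal (tendsto_one_div_add_atTop_nhds_zero_nat (𝕜 := ℝ))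
      rwa [ENNReal.ofReal_zero] at this
    refine ⟨g, fun k => ⟨hg1 k, hg2 k⟩, fun K hK => ?_, ?_⟩
    · obtain ⟨ρ, hρ⟩ := hK.isBounded.subset_ball x₀
      refine squeeze_zero' (g := fun m : ℕ => 1 / ((m:ℝ) + 1)) (Eventually.of_forall fun k => integral_nonneg fun _ => abs_nonneg _) ?_
        (tendsto_one_div_add_atTop_nhds_zero_nat (𝕜 := ℝ))
      filter_upwards [tendsto_natCast_atTop_atTop (R := ℝ) |>.eventually_ge_atTop ρ] with m hmρ
      have hmeas : AEStronglyMeasurable (fun y => g m y - u y) (volume.restrict K) :=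
        ((hg1 m).continuous.aestronglyMeasurable.sub hu.aestronglyMeasurable).restrict
      have e1 : ∫ y in K, |g m y - u y| = (∫⁻ y in K, ‖g m y - u y‖ₑ).toReal := by
        rw [← integral_norm_eq_lintegral_enorm hmeas]
        rfl
      rw [e1]
      refine ENNReal.toReal_le_of_le_ofReal (by positivity) ?_
      exact (lintegral_mono_set (hρ.trans (ball_subset_ball hmρ))).trans (hg3 m).le
    · refine tendsto_of_tendsto_of_tendsto_of_le_of_le tendsto_const_nhds ht (fun _ => zero_le) fun m => ?_
      have e1 : ∫⁻ z in Γᶜ, ENNReal.ofReal (‖gradient (g m) z - v z‖ ^ 2) ∂(measW n d Γ) =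
          ∫⁻ z in Γᶜ, ENNReal.ofReal (‖gradient (g m) z - v' z‖ ^ 2) ∂(measW n d Γ) := by
        refine setLIntegral_congr_fun hcl.isOpen_compl.measurableSet fun z hz => ?_
        simp only [hv'eq z hz]
      show ∫⁻ z in Γᶜ, ENNReal.ofReal (‖gradient (g m) z - v z‖ ^ 2) ∂(measW n d Γ) ≤ _
      rw [e1, Enr_grad hcl hnull (fun z => gradient (g m) z - v' z)]
      exact (hg4 m).le
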